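/- arXiv:1610.05740 — 2 statements merged into one kernel-verified Lean document; each statement's English description precedes it below -/
import Mathlib

section
/- Let F(x) = ∑_{n=0}^∞ c_n x^n be given by a power series with real coefficients converging for every real x (an entire function with real coefficients). Applying F entrywise preserves total non-negativity for all 4×4 totally non-negative real matrices if and only if either F is the constant c₀ with c₀ ≥ 0, or F(x) = c₁x for all x ≥ 0 with c₁ ≥ 0. The same conclusion holds if F applied entrywise preserves total non-negativity for all symmetric 5×5 totally non-negative matrices. -/
/-- A totally non-negative matrix: every minor is non-negative. -/
def TotallyNonneg {m n : ℕ} (A : Matrix (Fin m) (Fin n) ℝ) : Prop :=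
  ∀ (k : ℕ) (r : Fin k → Fin m) (c : Fin k → Fin n),
    StrictMono r → StrictMono c → 0 ≤ (A.submatrix r c).det

/-!
For `w ≥ 0` in any order, `w wᵀ` is totally non-negative, so the `2 × 2` minors of its image under
`F` force `F x * F y = F 1 * F (x * y)` on `[0, ∞)`. Comparing coefficients, `F` is a monomial.

To exclude `K * y ^ n` with `n ≥ 2`, border a singular `3 × 3` matrix `B` by zeros and apply the
monomial to the matrix with entries `1 + x * b i j`. The resulting determinant is
`K ^ 4 * x ^ 4 * n ^ 2 * n.choose 2 * tr (adj B * (B ⊙ B)) + O(x ^ 5)`. For symmetric positive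
semidefinite `B` this trace is non-negative by the Schur product theorem, so `B` has to be taken off
the diagonal of a symmetric totally non-negative matrix, which is why that matrix is `5 × 5`.
-/

open Filter Matrix Set Topology

section Determinant

variable {ι κ R : Type*} [Fintype ι] [DecidableEq ι] [Fintype κ] [CommRing R]

theorem det_mul_eq_sum_prod_mul_det (P : Matrix ι κ R) (Q : Matrix κ ι R) :
    (P * Q).det = ∑ f : ι → κ, (∏ i, P i (f i)) * (Q.submatrix f id).det := by
  classical
  have row_eq : P * Q = fun i => ∑ j, P i j • Q j := by
    ext i l
    simp [Matrix.mul_apply]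
  calc (P * Q).det
      = detRowAlternating.toMultilinearMap fun i => ∑ j, P i j • Q j := by rw [row_eq]; rfl
    _ = ∑ f : ι → κ, detRowAlternating.toMultilinearMap fun i => P i (f i) • Q (f i) :=
        MultilinearMap.map_sum _ _
    _ = ∑ f : ι → κ, (∏ i, P i (f i)) * (Q.submatrix f id).det :=
        Finset.sum_congr rfl fun f _ => MultilinearMap.map_smul_univ _ _ _

/-- The Cauchy–Binet formula. Summing over all maps instead of over increasing ones counts every
minor `(Fintype.card ι)!` times. -/
theorem factorial_card_mul_det_mul (P : Matrix ι κ R) (Q : Matrix κ ι R) :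
    ((Fintype.card ι).factorial : R) * (P * Q).det =
      ∑ f : ι → κ, (P.submatrix id f).det * (Q.submatrix f id).det := by
  have term_eq (σ : Equiv.Perm ι) (f : ι → κ) :
      (Equiv.Perm.sign σ : R) * (∏ i, P (σ i) (f i)) * (Q.submatrix f id).det =
        (∏ i, P i ((f ∘ σ.symm) i)) * (Q.submatrix (f ∘ σ.symm) id).det := by
    have hdet : (Q.submatrix (f ∘ σ.symm) id).det =
        (Equiv.Perm.sign σ : R) * (Q.submatrix f id).det := by
      simpa [Matrix.submatrix_submatrix] using det_permute σ.symm (Q.submatrix f id)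
    have hprod : ∏ i, P i ((f ∘ σ.symm) i) = ∏ i, P (σ i) (f i) := by
      rw [← Equiv.prod_comp σ]
      simp
    rw [hdet, hprod]
    ring
  symm
  calc ∑ f : ι → κ, (P.submatrix id f).det * (Q.submatrix f id).det
      = ∑ f : ι → κ, ∑ σ : Equiv.Perm ι,
          (Equiv.Perm.sign σ : R) * (∏ i, P (σ i) (f i)) * (Q.submatrix f id).det := by
        simp only [det_apply' (P.submatrix id _), Finset.sum_mul, submatrix_apply, id_eq]
    _ = ∑ σ : Equiv.Perm ι, ∑ f : ι → κ,
          (∏ i, P i ((f ∘ σ.symm) i)) * (Q.submatrix (f ∘ σ.symm) id).det := by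
        rw [Finset.sum_comm]
        simp only [term_eq]
    _ = ∑ _σ : Equiv.Perm ι, (P * Q).det := by
        refine Finset.sum_congr rfl fun σ _ => ?_
        rw [det_mul_eq_sum_prod_mul_det]
        exact Equiv.sum_comp (σ.arrowCongr (Equiv.refl κ)) fun f =>
          (∏ i, P i (f i)) * (Q.submatrix f id).det
    _ = ((Fintype.card ι).factorial : R) * (P * Q).det := by
        rw [Finset.sum_const, Finset.card_univ, Fintype.card_perm, nsmul_eq_mul]

theorem trace_adjugate_mul (A B : Matrix ι ι R) :
    (A.adjugate * B).trace = ∑ i, (A.updateCol i fun j => B j i).det := by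
  refine Finset.sum_congr rfl fun i _ => ?_
  rw [← cramer_apply, cramer_eq_adjugate_mulVec]
  rfl

theorem det_eq_det_sub_one_of_border_eq_one {n : ℕ} {A : Matrix (Fin (n + 1)) (Fin (n + 1)) R}
    (hrow : ∀ j, A 0 j = 1) (hcol : ∀ i, A i 0 = 1) :
    A.det = (of fun i j => A i.succ j.succ - 1 : Matrix (Fin n) (Fin n) R).det := by
  let C : Matrix (Fin (n + 1)) (Fin (n + 1)) R := of (Fin.cons (A 0) fun i => A i.succ - A 0)
  have hAC : A.det = C.det := by
    refine det_eq_of_forall_row_eq_smul_add_const (Fin.cons 0 1) 0 rfl fun i j => ?_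
    cases i using Fin.cases <;> simp [C]
  rw [hAC, det_succ_column_zero, Fin.sum_univ_succ]
  simp [C, hrow, hcol, submatrix]

theorem hasDerivAt_det {𝕜 : Type*} [NontriviallyNormedField 𝕜] {M : 𝕜 → Matrix ι ι 𝕜}
    {M' : Matrix ι ι 𝕜} {a : 𝕜} (hM : ∀ i j, HasDerivAt (fun x => M x i j) (M' i j) a) :
    HasDerivAt (fun x => (M x).det) ((M a).adjugate * M').trace a := by
  have hprod (σ : Equiv.Perm ι) : HasDerivAt (fun x => ∏ i, M x (σ i) i)
      (∑ i, (∏ j ∈ Finset.univ.erase i, M a (σ j) j) * M' (σ i) i) a :=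
    HasDerivAt.fun_finsetProd fun i _ => hM (σ i) i
  have hsum := HasDerivAt.fun_sum (u := Finset.univ) fun σ _ =>
    (hprod σ).const_mul (Equiv.Perm.sign σ : 𝕜)
  simp only [det_apply', trace_adjugate_mul]
  refine hsum.congr_deriv ?_
  simp only [Finset.mul_sum]
  rw [Finset.sum_comm]
  refine Finset.sum_congr rfl fun i _ => Finset.sum_congr rfl fun σ _ => ?_
  rw [← Finset.prod_erase_mul _ _ (Finset.mem_univ i), updateCol_self]
  congr 2
  exact Finset.prod_congr rfl fun j hj => (updateCol_ne (Finset.ne_of_mem_erase hj)).symm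

end Determinant

namespace TotallyNonneg

variable {l m n : ℕ} {A : Matrix (Fin m) (Fin n) ℝ}

theorem apply_nonneg (hA : TotallyNonneg A) (i : Fin m) (j : Fin n) : 0 ≤ A i j := by
  simpa using hA 1 (fun _ => i) (fun _ => j) (Subsingleton.strictMono _) (Subsingleton.strictMono _)

theorem mul_le_mul_of_lt (hA : TotallyNonneg A) {i j : Fin m} {k l : Fin n} (hij : i < j)
    (hkl : k < l) : A i l * A j k ≤ A i k * A j l := by
  have hminor := hA 2 ![i, j] ![k, l] (by simpa using hij) (by simpa using hkl)
  rw [det_fin_two] at hminor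
  simpa using hminor

theorem det_nonneg {A : Matrix (Fin n) (Fin n) ℝ} (hA : TotallyNonneg A) : 0 ≤ A.det := by
  simpa using hA n id id strictMono_id strictMono_id

theorem submatrix {m' n' : ℕ} (hA : TotallyNonneg A) {r : Fin m' → Fin m} {c : Fin n' → Fin n}
    (hr : StrictMono r) (hc : StrictMono c) : TotallyNonneg (A.submatrix r c) :=
  fun k r' c' hr' hc' => hA k (r ∘ r') (c ∘ c') (hr.comp hr') (hc.comp hc')

theorem transpose (hA : TotallyNonneg A) : TotallyNonneg Aᵀ := fun k r c hr hc => by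
  rw [← det_transpose]
  exact hA k c r hc hr

theorem smul (hA : TotallyNonneg A) {a : ℝ} (ha : 0 ≤ a) : TotallyNonneg (a • A) :=
  fun k r c hr hc => by
    change 0 ≤ (a • A.submatrix r c).det
    rw [det_smul]
    exact mul_nonneg (pow_nonneg ha _) (hA k r c hr hc)

theorem mul_diagonal (hA : TotallyNonneg A) {d : Fin n → ℝ} (hd : ∀ i, 0 ≤ d i) :
    TotallyNonneg (A * diagonal d) := fun k r c hr hc => by
  have hsub : (A * diagonal d).submatrix r c =
      of fun i j => d (c j) * A.submatrix r c i j := by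
    ext i j
    simp [mul_comm]
  rw [hsub, det_mul_row]
  exact mul_nonneg (Finset.prod_nonneg fun j _ => hd (c j)) (hA k r c hr hc)

/-- Sorting `f` multiplies both determinants by the same sign. -/
theorem det_submatrix_mul_det_submatrix_nonneg {k : ℕ} {P : Matrix (Fin k) (Fin m) ℝ}
    {Q : Matrix (Fin m) (Fin k) ℝ} (hP : TotallyNonneg P) (hQ : TotallyNonneg Q)
    (f : Fin k → Fin m) : 0 ≤ (P.submatrix id f).det * (Q.submatrix f id).det := by
  by_cases hf : Function.Injective f
  · let σ := Tuple.sort f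
    have hsorted : StrictMono (f ∘ σ) :=
      (Tuple.monotone_sort f).strictMono_of_injective (hf.comp σ.injective)
    have hPσ : (P.submatrix id (f ∘ σ)).det = Equiv.Perm.sign σ * (P.submatrix id f).det :=
      det_permute' σ (P.submatrix id f)
    have hQσ : (Q.submatrix (f ∘ σ) id).det = Equiv.Perm.sign σ * (Q.submatrix f id).det :=
      det_permute σ (Q.submatrix f id)
    have hsign : ((Equiv.Perm.sign σ : ℤ) : ℝ) * (Equiv.Perm.sign σ : ℤ) = 1 := by
      exact_mod_cast Int.units_coe_mul_self (Equiv.Perm.sign σ)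
    calc 0 ≤ (P.submatrix id (f ∘ σ)).det * (Q.submatrix (f ∘ σ) id).det :=
          mul_nonneg (hP k id _ strictMono_id hsorted) (hQ k _ id hsorted strictMono_id)
      _ = (P.submatrix id f).det * (Q.submatrix f id).det := by
          rw [hPσ, hQσ, mul_mul_mul_comm, hsign, one_mul]
  · obtain ⟨i, j, hij, hne⟩ : ∃ i j, f i = f j ∧ i ≠ j := by
      simpa [Function.Injective] using hf
    have hQ0 : (Q.submatrix f id).det = 0 := det_zero_of_row_eq hne (by ext l; simp [hij])
    rw [hQ0, mul_zero]

theorem mul {B : Matrix (Fin n) (Fin l) ℝ} (hA : TotallyNonneg A) (hB : TotallyNonneg B) :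
    TotallyNonneg (A * B) := fun k r c hr hc => by
  have hfact : (0 : ℝ) < (Fintype.card (Fin k)).factorial := by positivity
  refine nonneg_of_mul_nonneg_right ?_ hfact
  rw [submatrix_mul A B r id c Function.bijective_id, factorial_card_mul_det_mul]
  exact Finset.sum_nonneg fun f _ => det_submatrix_mul_det_submatrix_nonneg
    (hA.submatrix hr strictMono_id) (hB.submatrix strictMono_id hc) f

end TotallyNonneg

theorem totallyNonneg_vecMulVec {m n : ℕ} {u : Fin m → ℝ} {v : Fin n → ℝ} (hu : ∀ i, 0 ≤ u i)
    (hv : ∀ j, 0 ≤ v j) : TotallyNonneg (vecMulVec u v)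
  | 0, _, _, _, _ => by simp
  | 1, r, c, _, _ => by simpa [vecMulVec_apply] using mul_nonneg (hu (r 0)) (hv (c 0))
  | k + 2, r, c, _, _ => (det_vecMulVec (u ∘ r) (v ∘ c)).ge

theorem totallyNonneg_const {m n : ℕ} {a : ℝ} (ha : 0 ≤ a) :
    TotallyNonneg (of fun (_ : Fin m) (_ : Fin n) => a) := by
  have hconst : (of fun (_ : Fin m) (_ : Fin n) => a) = vecMulVec (fun _ => a) 1 := by
    ext
    simp [vecMulVec_apply]
  rw [hconst]
  exact totallyNonneg_vecMulVec (fun _ => ha) fun _ => zero_le_one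

section Convex

theorem sub_mul_sub_le_of_convexOn {𝕜 : Type*} [Field 𝕜] [LinearOrder 𝕜] [IsStrictOrderedRing 𝕜]
    {s : Set 𝕜} {f : 𝕜 → 𝕜} (hf : ConvexOn 𝕜 s f) {a b c : 𝕜} (ha : a ∈ s) (hc : c ∈ s)
    (hab : a ≤ b) (hbc : b ≤ c) : (c - a) * (f b - f a) ≤ (b - a) * (f c - f a) := by
  rcases hab.eq_or_lt with rfl | hab
  · simp
  rcases hbc.eq_or_lt with rfl | hbc
  · rfl
  linarith [hf.secant_mono_aux1 ha hc hab hbc]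

variable {m : ℕ} {t : Fin m → ℝ} {f : ℝ → ℝ}

/-- The collocation matrix of the functions `1`, `x`, `f x` at the points `t`. -/
def oneIdCollocation (t : Fin m → ℝ) (f : ℝ → ℝ) : Matrix (Fin m) (Fin 3) ℝ :=
  of fun i => ![1, t i, f (t i)]

theorem oneIdCollocation_mul_le_mul (ht₀ : ∀ i, 0 ≤ t i) (ht : Monotone t)
    (hf : ConvexOn ℝ (Ici 0) f) (hmono : MonotoneOn f (Ici 0)) (hf₀ : f 0 = 0) {i j : Fin m}
    {k l : Fin 3} (hij : i < j) (hkl : k < l) :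
    oneIdCollocation t f i l * oneIdCollocation t f j k ≤
      oneIdCollocation t f i k * oneIdCollocation t f j l := by
  have hle : t i ≤ t j := ht hij.le
  have hf_le : f (t i) ≤ f (t j) := hmono (ht₀ i) (ht₀ j) hle
  have hstar : t j * f (t i) ≤ t i * f (t j) := by
    simpa [hf₀] using sub_mul_sub_le_of_convexOn hf self_mem_Ici (ht₀ j) (ht₀ i) hle
  fin_cases k <;> fin_cases l <;> simp [oneIdCollocation] at hkl ⊢ <;> linarith

theorem oneIdCollocation_submatrix_det_nonneg (ht₀ : ∀ i, 0 ≤ t i) (ht : Monotone t)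
    (hf : ConvexOn ℝ (Ici 0) f) {r : Fin 3 → Fin m} (hr : Monotone r) :
    0 ≤ ((oneIdCollocation t f).submatrix r id).det := by
  have hsecant := sub_mul_sub_le_of_convexOn hf (ht₀ (r 0)) (ht₀ (r 2))
    (ht (hr (show (0 : Fin 3) ≤ 1 by decide))) (ht (hr (show (1 : Fin 3) ≤ 2 by decide)))
  rw [det_fin_three]
  simp only [oneIdCollocation, submatrix_apply, of_apply, id_eq, cons_val]
  linarith

theorem totallyNonneg_oneIdCollocation (ht₀ : ∀ i, 0 ≤ t i) (ht : Monotone t)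
    (hf : ConvexOn ℝ (Ici 0) f) (hmono : MonotoneOn f (Ici 0)) (hf₀ : f 0 = 0) :
    TotallyNonneg (oneIdCollocation t f)
  | 0, _, _, _, _ => by simp
  | 1, r, c, _, _ => by
    have hf_nonneg : 0 ≤ f (t (r 0)) := hf₀ ▸ hmono self_mem_Ici (ht₀ (r 0)) (ht₀ (r 0))
    simp only [det_unique, submatrix_apply, oneIdCollocation, of_apply]
    generalize c default = j
    fin_cases j <;> simp [ht₀, hf_nonneg]
  | 2, r, c, hr, hc => by
    rw [det_fin_two, sub_nonneg]
    exact oneIdCollocation_mul_le_mul ht₀ ht hf hmono hf₀ (hr (by decide)) (hc (by decide))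
  | 3, r, c, hr, hc => by
    rw [hc.eq_id]
    exact oneIdCollocation_submatrix_det_nonneg ht₀ ht hf hr.monotone
  | k + 4, _, _, _, hc => by
    have hcard := Fintype.card_le_of_injective _ hc.injective
    simp at hcard

end Convex

section PowerPerturbation

/-- The polynomial `((1 + x * b) ^ n - 1) / x` in `x`. The quotient is expanded as a geometric sum
so that its value at `x = 0` is the limit rather than `0`. -/
def powQuotient (n : ℕ) (b x : ℝ) : ℝ := b * ∑ k ∈ Finset.range n, (1 + x * b) ^ k

theorem mul_powQuotient (n : ℕ) (b x : ℝ) : x * powQuotient n b x = (1 + x * b) ^ n - 1 := by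
  rw [← geom_sum_mul, powQuotient]
  ring

theorem powQuotient_zero (n : ℕ) (b : ℝ) : powQuotient n b 0 = n * b := by
  simp [powQuotient, mul_comm]

theorem map_powQuotient_zero {ι κ : Type*} (n : ℕ) (B : Matrix ι κ ℝ) :
    B.map (powQuotient n · 0) = (n : ℝ) • B := by
  ext i j
  simp [powQuotient_zero]

theorem hasDerivAt_powQuotient_zero (n : ℕ) (b : ℝ) :
    HasDerivAt (powQuotient n b) (n.choose 2 * (b * b)) 0 := by
  have hpow (k : ℕ) : HasDerivAt (fun x : ℝ => (1 + x * b) ^ k) (k * b) 0 := by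
    simpa using (((hasDerivAt_id (0 : ℝ)).mul_const b).const_add 1).fun_pow k
  have hsum := (HasDerivAt.fun_sum (u := Finset.range n) fun k _ => hpow k).const_mul b
  have hchoose : ∑ k ∈ Finset.range n, (k : ℝ) = n.choose 2 := by
    rw [← Nat.cast_sum, Finset.sum_range_id, Nat.choose_two_right]
  refine hsum.congr_deriv ?_
  rw [← Finset.sum_mul, hchoose]
  ring

variable {ι : Type*} [Fintype ι] [DecidableEq ι]

theorem hasDerivAt_det_map_powQuotient_zero (n : ℕ) (B : Matrix ι ι ℝ) :
    HasDerivAt (fun x => (B.map (powQuotient n · x)).det)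
      (n ^ (Fintype.card ι - 1) * n.choose 2 * (B.adjugate * B ⊙ B).trace) 0 := by
  have hderiv := hasDerivAt_det (M := fun x => B.map (powQuotient n · x))
    (M' := (n.choose 2 : ℝ) • B ⊙ B) fun i j => hasDerivAt_powQuotient_zero n (B i j)
  refine hderiv.congr_deriv ?_
  rw [map_powQuotient_zero, adjugate_smul, smul_mul_smul_comm, trace_smul, smul_eq_mul]

theorem eventually_det_map_one_add_mul_pow_sub_one_neg {B : Matrix ι ι ℝ} {n : ℕ} (hn : 2 ≤ n)
    (hdet : B.det = 0) (htrace : (B.adjugate * B ⊙ B).trace < 0) :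
    ∀ᶠ x in 𝓝[>] (0 : ℝ), (B.map fun b => (1 + x * b) ^ n - 1).det < 0 := by
  let D : ℝ → ℝ := fun x => (B.map (powQuotient n · x)).det
  have hD₀ : D 0 = 0 := by
    simp [D, map_powQuotient_zero, hdet]
  have hD' : deriv D 0 < 0 := by
    have hn₀ : (0 : ℝ) < n := by exact_mod_cast (by omega : 0 < n)
    have hchoose : (0 : ℝ) < n.choose 2 := by exact_mod_cast Nat.choose_pos hn
    rw [(hasDerivAt_det_map_powQuotient_zero n B).deriv]
    exact mul_neg_of_pos_of_neg (mul_pos (pow_pos hn₀ _) hchoose) htrace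
  have hscale (x : ℝ) :
      (B.map fun b => (1 + x * b) ^ n - 1).det = x ^ Fintype.card ι * D x := by
    rw [← det_smul]
    congr 1
    ext i j
    exact (mul_powQuotient n (B i j) x).symm
  have hsigns := eventually_nhdsWithin_sign_eq_of_deriv_neg hD' hD₀
  filter_upwards [nhdsWithin_le_nhds hsigns, self_mem_nhdsWithin] with x hsign hx
  have hDx : D x < 0 := by
    rw [← sign_eq_neg_one_iff, hsign, sign_eq_neg_one_iff]
    simpa using hx
  rw [hscale]
  exact mul_neg_of_pos_of_neg (pow_pos hx _) hDx

end PowerPerturbation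

section TestMatrix

/-- The positive part of `t - 2`, a convex function that vanishes at the first three of the nodes
`0, 1, 2, 3, 4` and is affine on the last three. -/
def hinge (t : ℝ) : ℝ := max (t - 2) 0

theorem convexOn_hinge : ConvexOn ℝ (Ici 0) hinge :=
  ((convexOn_id (convex_Ici 0)).add_const (-2)).sup (convexOn_const 0 (convex_Ici 0))

theorem monotone_hinge : Monotone hinge := fun _ _ hxy =>
  max_le_max (sub_le_sub_right hxy 2) le_rfl

/-- The Gram matrix of the vectors `(1, t, hinge t)`, `t = 0, 1, 2, 3, 4`, with respect to the inner
product with weights `1, x, x`. -/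
def hingeGram (x : ℝ) : Matrix (Fin 5) (Fin 5) ℝ :=
  oneIdCollocation (fun i => (i : ℕ)) hinge * diagonal ![1, x, x] *
    (oneIdCollocation (fun i => (i : ℕ)) hinge)ᵀ

theorem isSymm_hingeGram (x : ℝ) : (hingeGram x).IsSymm := by
  simp [IsSymm, hingeGram, Matrix.mul_assoc]

theorem totallyNonneg_hingeGram {x : ℝ} (hx : 0 ≤ x) : TotallyNonneg (hingeGram x) := by
  have hcolloc : TotallyNonneg (oneIdCollocation (fun i : Fin 5 => ((i : ℕ) : ℝ)) hinge) :=
    totallyNonneg_oneIdCollocation (fun i => Nat.cast_nonneg i)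
      (fun _ _ hij => Nat.cast_le.2 hij) convexOn_hinge (monotone_hinge.monotoneOn _)
      (by norm_num [hinge])
  refine (hcolloc.mul_diagonal fun i => ?_).mul hcolloc.transpose
  fin_cases i <;> simp [hx]

theorem hingeGram_apply (x : ℝ) (i j : Fin 5) :
    hingeGram x i j = 1 + x * ((i : ℕ) * (j : ℕ) + hinge (i : ℕ) * hinge (j : ℕ)) := by
  rw [hingeGram, mul_apply, Fin.sum_univ_three]
  simp only [Matrix.mul_diagonal, transpose_apply, oneIdCollocation, of_apply, cons_val]
  ring

/-- The matrix `B` for which `1 + x * B` is the block of `hingeGram x` with rows `1, 2, 3` and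
columns `2, 3, 4`. -/
def hingeBlock : Matrix (Fin 3) (Fin 3) ℝ := !![2, 3, 4; 4, 6, 8; 6, 10, 14]

theorem det_hingeBlock : hingeBlock.det = 0 := by
  rw [det_fin_three]
  simp only [hingeBlock, of_apply, cons_val]
  norm_num

theorem trace_adjugate_hingeBlock_mul_hadamard_self_neg :
    (hingeBlock.adjugate * hingeBlock ⊙ hingeBlock).trace < 0 := by
  simp only [trace_fin_three, mul_apply, Fin.sum_univ_three, hadamard_apply, hingeBlock,
    adjugate_fin_three_of, of_apply, cons_val]
  norm_num

theorem det_hingeGram_submatrix_map_pow (n : ℕ) (x : ℝ) :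
    (((hingeGram x).submatrix Fin.castSucc (Fin.succAbove 1)).map (· ^ n)).det =
      (hingeBlock.map fun b => (1 + x * b) ^ n - 1).det := by
  rw [det_eq_det_sub_one_of_border_eq_one]
  · congr 1
    ext i j
    fin_cases i <;> fin_cases j <;>
      norm_num [hingeGram_apply, hinge, hingeBlock, Fin.succAbove, Fin.lt_def]
  · intro j
    norm_num [hingeGram_apply, hinge]
  · intro i
    norm_num [hingeGram_apply, hinge, Fin.succAbove]

theorem exists_det_hingeGram_submatrix_map_pow_neg {n : ℕ} (hn : 2 ≤ n) :
    ∃ x > 0, (((hingeGram x).submatrix Fin.castSucc (Fin.succAbove 1)).map (· ^ n)).det < 0 := by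
  have hneg := eventually_det_map_one_add_mul_pow_sub_one_neg hn det_hingeBlock
    trace_adjugate_hingeBlock_mul_hadamard_self_neg
  obtain ⟨x, hxneg, hx⟩ := (hneg.and self_mem_nhdsWithin).exists
  exact ⟨x, hx, (det_hingeGram_submatrix_map_pow n x).trans_lt hxneg⟩

end TestMatrix

section PowerSeries

theorem coeff_eq_of_hasSum_mul_pow_of_frequently_eq {𝕜 : Type*} [NontriviallyNormedField 𝕜]
    {c d : ℕ → 𝕜} {f g : 𝕜 → 𝕜} (hf : ∀ᶠ z in 𝓝 0, HasSum (fun n => c n * z ^ n) (f z))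
    (hg : ∀ᶠ z in 𝓝 0, HasSum (fun n => d n * z ^ n) (g z)) (hfg : ∃ᶠ z in 𝓝[≠] 0, f z = g z) :
    c = d := by
  have hseries {a : ℕ → 𝕜} {h : 𝕜 → 𝕜} (hh : ∀ᶠ z in 𝓝 0, HasSum (fun n => a n * z ^ n) (h z)) :
      HasFPowerSeriesAt h (FormalMultilinearSeries.ofScalars 𝕜 a) 0 := by
    rw [hasFPowerSeriesAt_iff]
    simpa [FormalMultilinearSeries.coeff_ofScalars, mul_comm] using hh
  have heq : f =ᶠ[𝓝 0] g :=
    ((hseries hf).analyticAt.frequently_eq_iff_eventually_eq (hseries hg).analyticAt).1 hfg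
  have hofScalars := (hseries hf).eq_formalMultilinearSeries_of_eventually (hseries hg) heq
  funext n
  simpa [FormalMultilinearSeries.coeff_ofScalars] using congrArg (·.coeff n) hofScalars

variable {c d : ℕ → ℝ} {F G : ℝ → ℝ}

theorem coeff_eq_of_hasSum_mul_pow_of_eqOn_Ici (hF : ∀ x, HasSum (fun n => c n * x ^ n) (F x))
    (hG : ∀ x, HasSum (fun n => d n * x ^ n) (G x)) (hFG : EqOn F G (Ici 0)) : c = d := by
  refine coeff_eq_of_hasSum_mul_pow_of_frequently_eq (.of_forall hF) (.of_forall hG) ?_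
  have hpos : ∀ᶠ x in 𝓝[>] (0 : ℝ), F x = G x :=
    eventually_nhdsWithin_of_forall fun x hx => hFG (Ioi_subset_Ici_self hx)
  exact hpos.frequently.filter_mono (nhdsGT_le_nhdsNE 0)

theorem hasSum_single_mul_pow (n : ℕ) (a x : ℝ) :
    HasSum (fun k => (Pi.single n a : ℕ → ℝ) k * x ^ k) (a * x ^ n) := by
  simpa using hasSum_single (f := fun k => (Pi.single n a : ℕ → ℝ) k * x ^ k) n
    fun k hk => by simp [hk]

theorem coeff_mul_eq_of_mul_eq_mul_map_mul (hF : ∀ x, HasSum (fun n => c n * x ^ n) (F x))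
    (hmul : ∀ x ≥ 0, ∀ y ≥ 0, F x * F y = F 1 * F (x * y)) (n : ℕ) {y : ℝ} (hy : 0 ≤ y) :
    c n * F y = F 1 * (c n * y ^ n) := by
  have hleft (x : ℝ) : HasSum (fun n => c n * F y * x ^ n) (F x * F y) := by
    simpa only [mul_right_comm] using (hF x).mul_right (F y)
  have hright (x : ℝ) : HasSum (fun n => F 1 * (c n * y ^ n) * x ^ n) (F 1 * F (x * y)) := by
    simpa only [mul_pow, mul_assoc, mul_comm, mul_left_comm] using (hF (x * y)).mul_left (F 1)
  exact congrFun (coeff_eq_of_hasSum_mul_pow_of_eqOn_Ici hleft hright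
    fun x hx => hmul x hx y hy) n

theorem exists_eq_coeff_mul_pow (hF : ∀ x, HasSum (fun n => c n * x ^ n) (F x))
    (hmul : ∀ x ≥ 0, ∀ y ≥ 0, F x * F y = F 1 * F (x * y)) : ∃ n, ∀ x, F x = c n * x ^ n := by
  rcases eq_or_ne c 0 with rfl | hc
  · exact ⟨0, fun x => (hF x).unique (by simp)⟩
  obtain ⟨n, hn⟩ := Function.ne_iff.1 hc
  have hpow : EqOn F (fun y => F 1 * y ^ n) (Ici 0) := fun y hy =>
    mul_left_cancel₀ hn ((coeff_mul_eq_of_mul_eq_mul_map_mul hF hmul n hy).trans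
      (mul_left_comm _ _ _))
  have hsingle : c = Pi.single n (F 1) :=
    coeff_eq_of_hasSum_mul_pow_of_eqOn_Ici hF (hasSum_single_mul_pow n (F 1)) hpow
  refine ⟨n, fun x => (hF x).unique ?_⟩
  simpa [hsingle] using hasSum_single_mul_pow n (F 1) x

end PowerSeries

/-- `F` preserves total non-negativity of the `4 × 4` submatrices of symmetric totally non-negative
`5 × 5` matrices. Preservation on all `4 × 4` matrices and preservation on symmetric `5 × 5`
matrices both imply this. -/
def PreservesSymmSubmatrices (F : ℝ → ℝ) : Prop :=
  ∀ A : Matrix (Fin 5) (Fin 5) ℝ, A.IsSymm → TotallyNonneg A →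
    ∀ r c : Fin 4 → Fin 5, StrictMono r → StrictMono c → TotallyNonneg ((A.submatrix r c).map F)

namespace PreservesSymmSubmatrices

variable {F : ℝ → ℝ}

theorem of_forall_four
    (h : ∀ A : Matrix (Fin 4) (Fin 4) ℝ, TotallyNonneg A → TotallyNonneg (A.map F)) :
    PreservesSymmSubmatrices F :=
  fun _ _ hA _ _ hr hc => h _ (hA.submatrix hr hc)

theorem of_forall_symm_five
    (h : ∀ A : Matrix (Fin 5) (Fin 5) ℝ, A.IsSymm → TotallyNonneg A → TotallyNonneg (A.map F)) :
    PreservesSymmSubmatrices F :=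
  fun A hsymm hA _ _ hr hc => (h A hsymm hA).submatrix hr hc

theorem totallyNonneg_map_vecMulVec (hF : PreservesSymmSubmatrices F) {w : Fin 4 → ℝ}
    (hw : ∀ i, 0 ≤ w i) : TotallyNonneg ((vecMulVec w w).map F) := by
  let w₅ : Fin 5 → ℝ := Fin.snoc w 0
  have hw₅ : ∀ i, 0 ≤ w₅ i := Fin.lastCases (Fin.snoc_last (α := fun _ => ℝ) 0 w).ge
    fun i => (hw i).trans_eq (Fin.snoc_castSucc (α := fun _ => ℝ) 0 w i).symm
  have h := hF _ (transpose_vecMulVec w₅ w₅) (totallyNonneg_vecMulVec hw₅ hw₅)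
    Fin.castSucc Fin.castSucc Fin.strictMono_castSucc Fin.strictMono_castSucc
  convert h using 1
  ext i j
  simp [w₅, vecMulVec_apply]

theorem nonneg (hF : PreservesSymmSubmatrices F) {x : ℝ} (hx : 0 ≤ x) : 0 ≤ F x := by
  have h := hF.totallyNonneg_map_vecMulVec (w := ![1, x, 0, 0])
    (by intro i; fin_cases i <;> simp [hx])
  simpa [vecMulVec_apply] using h.apply_nonneg 0 1

theorem mul_le_mul (hF : PreservesSymmSubmatrices F) {p q r s : ℝ} (hp : 0 ≤ p) (hq : 0 ≤ q)
    (hr : 0 ≤ r) (hs : 0 ≤ s) : F (p * s) * F (q * r) ≤ F (p * r) * F (q * s) := by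
  have h := hF.totallyNonneg_map_vecMulVec (w := ![p, q, r, s])
    (by intro i; fin_cases i <;> simpa)
  simpa [vecMulVec_apply] using
    h.mul_le_mul_of_lt (show (0 : Fin 4) < 1 by decide) (show (2 : Fin 4) < 3 by decide)

theorem mul_eq_mul_map_mul (hF : PreservesSymmSubmatrices F) :
    ∀ x ≥ 0, ∀ y ≥ 0, F x * F y = F 1 * F (x * y) := fun x hx y hy => by
  apply le_antisymm
  · simpa [mul_comm] using hF.mul_le_mul zero_le_one hy zero_le_one hx
  · simpa [mul_comm] using hF.mul_le_mul zero_le_one hy hx zero_le_one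

theorem eq_zero_of_mul_pow {K : ℝ} {n : ℕ} (hF : PreservesSymmSubmatrices fun x => K * x ^ n)
    (hn : 2 ≤ n) : K = 0 := by
  obtain ⟨x, hx, hneg⟩ := exists_det_hingeGram_submatrix_map_pow_neg hn
  let A := (hingeGram x).submatrix Fin.castSucc (Fin.succAbove 1)
  have hdet : 0 ≤ (A.map fun y => K * y ^ n).det :=
    (hF _ (isSymm_hingeGram x) (totallyNonneg_hingeGram hx.le) _ _ Fin.strictMono_castSucc
      (Fin.strictMono_succAbove 1)).det_nonneg
  have hscale : (A.map fun y => K * y ^ n).det = K ^ 4 * (A.map (· ^ n)).det :=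
    det_smul (A.map (· ^ n)) K
  rw [hscale] at hdet
  have hK : K ^ 4 ≤ 0 := nonpos_of_mul_nonneg_left hdet hneg
  exact pow_eq_zero_iff (by norm_num) |>.1 (le_antisymm hK (by positivity))

theorem eq_const_or_eq_mul {c : ℕ → ℝ} (hsum : ∀ x, HasSum (fun n => c n * x ^ n) (F x))
    (hF : PreservesSymmSubmatrices F) :
    (0 ≤ c 0 ∧ ∀ x, F x = c 0) ∨ (0 ≤ c 1 ∧ ∀ x ≥ 0, F x = c 1 * x) := by
  obtain ⟨n, hn⟩ := exists_eq_coeff_mul_pow hsum hF.mul_eq_mul_map_mul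
  have hcn : 0 ≤ c n := by simpa [hn] using hF.nonneg zero_le_one
  match n with
  | 0 => exact .inl ⟨hcn, by simpa using hn⟩
  | 1 => exact .inr ⟨hcn, fun x _ => by simpa using hn x⟩
  | k + 2 =>
    have hzero : c (k + 2) = 0 := eq_zero_of_mul_pow (funext hn ▸ hF) (by omega)
    have hF₀ : ∀ x, F x = 0 := fun x => by simp [hn, hzero]
    have hc : c = 0 := coeff_eq_of_hasSum_mul_pow_of_eqOn_Ici hsum (d := 0) (G := 0)
      (fun x => by simp) fun x _ => hF₀ x
    exact .inl ⟨by simp [hc], fun x => by simp [hF₀, hc]⟩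

end PreservesSymmSubmatrices

theorem TotallyNonneg.map_of_eq_const_or_eq_mul {m n : ℕ} {A : Matrix (Fin m) (Fin n) ℝ}
    (hA : TotallyNonneg A) {F : ℝ → ℝ} {a b : ℝ}
    (hF : (0 ≤ a ∧ ∀ x, F x = a) ∨ (0 ≤ b ∧ ∀ x ≥ 0, F x = b * x)) : TotallyNonneg (A.map F) := by
  rcases hF with ⟨ha, hconst⟩ | ⟨hb, hlinear⟩
  · have hmap : A.map F = of fun _ _ => a := by
      ext i j
      exact hconst (A i j)
    exact hmap ▸ totallyNonneg_const ha
  · have hmap : A.map F = b • A := by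
      ext i j
      exact hlinear (A i j) (hA.apply_nonneg i j)
    exact hmap ▸ hA.smul hb

/-- An entire function (with real coefficients) preserves total non-negativity entrywise
on `4 × 4` matrices iff it is a non-negative constant `c₀` or the linear map `c₁ x`
with `c₁ ≥ 0`; the same conclusion follows from preservation on symmetric `5 × 5`
matrices. -/
theorem entire_totally_nonneg_preserver (c : ℕ → ℝ) (F : ℝ → ℝ)
    (hF : ∀ x : ℝ, HasSum (fun n => c n * x ^ n) (F x)) :
    ((∀ A : Matrix (Fin 4) (Fin 4) ℝ, TotallyNonneg A → TotallyNonneg (A.map F)) ↔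
      ((0 ≤ c 0 ∧ ∀ x : ℝ, F x = c 0) ∨
        (0 ≤ c 1 ∧ ∀ x ≥ (0 : ℝ), F x = c 1 * x))) ∧
    ((∀ A : Matrix (Fin 5) (Fin 5) ℝ, A.IsSymm → TotallyNonneg A →
        TotallyNonneg (A.map F)) →
      ((0 ≤ c 0 ∧ ∀ x : ℝ, F x = c 0) ∨
        (0 ≤ c 1 ∧ ∀ x ≥ (0 : ℝ), F x = c 1 * x))) :=
  ⟨⟨fun h => (PreservesSymmSubmatrices.of_forall_four h).eq_const_or_eq_mul hF,
      fun h _ hA => hA.map_of_eq_const_or_eq_mul h⟩,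
    fun h => (PreservesSymmSubmatrices.of_forall_symm_five h).eq_const_or_eq_mul hF⟩
end

section
/- Let ρ ∈ (0,∞) and let F : [0,ρ] → ℝ. The following are equivalent: (1) for every positive semidefinite Hankel matrix of any finite size with entries in [0,ρ], applying F entrywise yields a positive semidefinite matrix; (2) F is absolutely monotonic on [0,ρ) — i.e., F is continuous on [0,ρ), infinitely differentiable on (0,ρ), and F^{(k)}(x) ≥ 0 for all x ∈ (0,ρ) and all k ≥ 0 — and F(ρ) ≥ lim_{x→ρ⁻} F(x); (3) for every positive semidefinite matrix of any finite size with entries in [0,ρ], applying F entrywise yields a positive semidefinite matrix. If instead F : [0,ρ) → ℝ, the same equivalences hold with (2) replaced by: F is absolutely monotonic on [0,ρ). -/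
open Filter Set

/-- A Hankel matrix: the `(i,j)` entry depends only on `i + j`. -/
def IsHankelMat {n : ℕ} (A : Matrix (Fin n) (Fin n) ℝ) : Prop :=
  ∀ i j k l : Fin n, (i : ℕ) + (j : ℕ) = (k : ℕ) + (l : ℕ) → A i j = A k l

/-- Absolute monotonicity on `[0, ρ)`: continuity on `[0, ρ)`, smoothness on `(0, ρ)`,
and non-negativity of all derivatives there. -/
def AbsMonOnIco (F : ℝ → ℝ) (ρ : ℝ) : Prop :=
  ContinuousOn F (Set.Ico 0 ρ) ∧ ContDiffOn ℝ (⊤ : ℕ∞) F (Set.Ioo 0 ρ) ∧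
    ∀ k : ℕ, ∀ x ∈ Set.Ioo (0 : ℝ) ρ, 0 ≤ iteratedDerivWithin k F (Set.Ioo 0 ρ) x

/-!
An absolutely monotone function is the sum of its Taylor series, which has non-negative
coefficients, so the Schur product theorem makes it a preserver on `[0, ρ)`. A jump at `ρ` adds a
non-negative multiple of the limit of the preservers `(x / ρ) ^ k`.

Conversely, let `F` preserve positivity of Hankel matrices. Applied to `a + ε u uᵀ` with
`u i = 2⁻ⁱ` and tested against a vector annihilating the moments of order below `N`, this gives
`F⁽ᴺ⁾(a) ≥ 0` as `ε → 0⁺` (Horn and Loewner), provided `F` is smooth at `a`. In general `F` is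
only known to be monotone, but its mollifications are smooth and inherit the test inequalities,
so they are absolutely monotone, i.e. power series whose coefficients are non-negative and
uniformly bounded. A subsequence converges to an analytic function; monotonicity of `F`
interlaces the two functions, so they agree on `(0, ρ)`. Right-continuity of `F` at `0` comes from
a single `3 × 3` Hankel matrix.
-/

open scoped Topology ContDiff

section PosSemidef

variable {ι : Type*}

lemma posSemidef_of_tendsto {α : Type*} {l : Filter α} [l.NeBot] {B : α → Matrix ι ι ℝ}
    {A : Matrix ι ι ℝ} (hB : ∀ᶠ t in l, (B t).PosSemidef)
    (h : ∀ i j, Tendsto (fun t => B t i j) l (𝓝 (A i j))) : A.PosSemidef := by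
  constructor
  · ext i j
    refine tendsto_nhds_unique_of_eventuallyEq (h j i) (h i j) ?_
    filter_upwards [hB] with t ht using ht.1.apply i j
  · intro v
    have hlim : Tendsto (fun t => v.sum fun i x => v.sum fun j y => star x * B t i j * y) l
        (𝓝 (v.sum fun i x => v.sum fun j y => star x * A i j * y)) :=
      tendsto_finsetSum _ fun i _ => tendsto_finsetSum _ fun j _ =>
        ((h i j).const_mul _).mul_const _
    refine ge_of_tendsto hlim ?_
    filter_upwards [hB] with t ht using ht.2 v

lemma posSemidef_map_pow [Finite ι] {A : Matrix ι ι ℝ} (hA : A.PosSemidef) (k : ℕ) :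
    (A.map (· ^ k)).PosSemidef := by
  induction k with
  | zero =>
    convert Matrix.posSemidef_vecMulVec_self_star (1 : ι → ℝ) using 1
    ext i j
    simp [Matrix.vecMulVec_apply]
  | succ k ih =>
    have hmap : A.map (· ^ (k + 1)) = (A.map (· ^ k)).hadamard A := by
      ext i j
      simp [Matrix.hadamard, pow_succ]
    rw [hmap]
    exact ih.hadamard hA

lemma posSemidef_map_of_hasSum [Finite ι] {A : Matrix ι ι ℝ} (hA : A.PosSemidef) {c : ℕ → ℝ}
    (hc : ∀ k, 0 ≤ c k) {G : ℝ → ℝ}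
    (hG : ∀ i j, HasSum (fun k => c k * A i j ^ k) (G (A i j))) : (A.map G).PosSemidef := by
  refine posSemidef_of_tendsto (l := atTop)
    (B := fun N => ∑ k ∈ Finset.range N, c k • A.map (· ^ k)) ?_ fun i j => ?_
  · exact Eventually.of_forall fun N =>
      Matrix.posSemidef_sum _ fun k _ => (posSemidef_map_pow hA k).smul (hc k)
  · simpa [Matrix.sum_apply] using (hG i j).tendsto_sum_nat

lemma posSemidef_map_indicator_singleton [Finite ι] {A : Matrix ι ι ℝ} (hA : A.PosSemidef)
    {ρ : ℝ} (hρ : 0 < ρ) (hAρ : ∀ i j, A i j ∈ Icc 0 ρ) :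
    (A.map (({ρ} : Set ℝ).indicator (1 : ℝ → ℝ))).PosSemidef := by
  refine posSemidef_of_tendsto (l := atTop) (B := fun k : ℕ => (ρ⁻¹ • A).map (· ^ k))
    (Eventually.of_forall fun k => posSemidef_map_pow (hA.smul (inv_nonneg.2 hρ.le)) k)
    fun i j => ?_
  simp only [Matrix.map_apply, Matrix.smul_apply, smul_eq_mul]
  rcases (hAρ i j).2.eq_or_lt with heq | hlt
  · simp [heq, hρ.ne']
  · have hnonneg : 0 ≤ ρ⁻¹ * A i j := mul_nonneg (inv_nonneg.2 hρ.le) (hAρ i j).1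
    have hlt_one : ρ⁻¹ * A i j < 1 := by rwa [inv_mul_lt_iff₀ hρ, mul_one]
    simpa [hlt.ne] using tendsto_pow_atTop_nhds_zero_of_lt_one hnonneg hlt_one

lemma posSemidef_iff_sum_nonneg [Fintype ι] {A : Matrix ι ι ℝ} :
    A.PosSemidef ↔ A.IsSymm ∧ ∀ v : ι → ℝ, 0 ≤ ∑ i, ∑ j, v i * v j * A i j := by
  have hform (v : ι → ℝ) : star v ⬝ᵥ A.mulVec v = ∑ i, ∑ j, v i * v j * A i j := by
    simp only [star_trivial, dotProduct, Matrix.mulVec, Finset.mul_sum]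
    exact Finset.sum_congr rfl fun i _ => Finset.sum_congr rfl fun j _ => by ring
  simp only [Matrix.posSemidef_iff_dotProduct_mulVec, hform, Matrix.IsHermitian, Matrix.IsSymm,
    Matrix.conjTranspose_eq_transpose_of_trivial]

end PosSemidef

section Bernstein

variable {f : ℝ → ℝ} {s t : Set ℝ}

lemma absolutelyMonotoneOn_mono (hf : AbsolutelyMonotoneOn f t) (hst : s ⊆ t) :
    AbsolutelyMonotoneOn f s :=
  let ⟨p, hp, hp_nonneg⟩ := hf
  ⟨p, hp.mono hst, fun n _ hx => hp_nonneg n (hst hx)⟩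

lemma iteratedDerivWithin_eq_of_subset {n : ℕ} (hst : s ⊆ t) (hs : UniqueDiffOn ℝ s)
    (ht : UniqueDiffOn ℝ t) (hf : ContDiffOn ℝ n f t) {x : ℝ} (hx : x ∈ s) :
    iteratedDerivWithin n f s x = iteratedDerivWithin n f t x := by
  rw [iteratedDerivWithin, iteratedDerivWithin, iteratedFDerivWithin_subset hst hs ht hf hx]

variable {a b x : ℝ}

lemma contDiffOn_nat_of_absolutelyMonotoneOn (hf : AbsolutelyMonotoneOn f s) (n : ℕ) :
    ContDiffOn ℝ n f s :=
  hf.contDiffOn.of_le (mod_cast le_top)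

lemma taylorWithinEval_le_of_absolutelyMonotoneOn (hab : a ≤ b)
    (hf : AbsolutelyMonotoneOn f (Icc a b)) (n : ℕ) :
    taylorWithinEval f n (Icc a b) a b ≤ f b := by
  rcases hab.eq_or_lt with rfl | hlt
  · simp
  have hdiff : UniqueDiffOn ℝ (Icc a b) := uniqueDiffOn_Icc hlt
  have hf' := hf.contDiffOn.differentiableOn_iteratedDerivWithin (m := n)
    (mod_cast WithTop.coe_lt_top _) hdiff
  rw [← uIcc_of_le hab] at hf'
  obtain ⟨ξ, hξ, hrem⟩ := taylor_mean_remainder_lagrange hlt.ne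
    (by simpa only [uIcc_of_le hab] using contDiffOn_nat_of_absolutelyMonotoneOn hf n)
    (hf'.mono uIoo_subset_uIcc_self)
  rw [uIcc_of_le hab] at hrem
  rw [uIoo_of_le hab] at hξ
  have hderiv := hf.iteratedDerivWithin_nonneg hdiff (n + 1) (Ioo_subset_Icc_self hξ)
  have : 0 ≤ (b - a) ^ (n + 1) := pow_nonneg (sub_nonneg.2 hab) _
  have : 0 ≤ f b - taylorWithinEval f n (Icc a b) a b := hrem ▸ by positivity
  linarith

lemma iteratedDerivWithin_mul_pow_div_factorial_le (hs : UniqueDiffOn ℝ s)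
    (hf : AbsolutelyMonotoneOn f s) (hab : a < b) (hIcc : Icc a b ⊆ s) (n : ℕ) :
    iteratedDerivWithin n f s a * (b - a) ^ n / n.factorial ≤ f b := by
  have hfIcc : AbsolutelyMonotoneOn f (Icc a b) := absolutelyMonotoneOn_mono hf hIcc
  refine le_trans ?_ (taylorWithinEval_le_of_absolutelyMonotoneOn hab.le hfIcc n)
  rw [taylor_within_apply, ← iteratedDerivWithin_eq_of_subset hIcc (uniqueDiffOn_Icc hab) hs
    (contDiffOn_nat_of_absolutelyMonotoneOn hf n) (left_mem_Icc.2 hab.le)]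
  refine le_of_eq_of_le ?_ (Finset.single_le_sum
    (f := fun k : ℕ => ((k.factorial : ℝ)⁻¹ * (b - a) ^ k) • iteratedDerivWithin k f (Icc a b) a)
    (fun k _ => ?_) (Finset.self_mem_range_succ n))
  · simp only [smul_eq_mul]
    ring
  · have := hfIcc.iteratedDerivWithin_nonneg (uniqueDiffOn_Icc hab) k (left_mem_Icc.2 hab.le)
    have : 0 ≤ (b - a) ^ k := pow_nonneg (sub_nonneg.2 hab.le) _
    simp only [smul_eq_mul]
    positivity

lemma exists_cauchy_remainder_of_absolutelyMonotoneOn (hs : UniqueDiffOn ℝ s)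
    (hf : AbsolutelyMonotoneOn f s) (hax : a < x) (hIcc : Icc a x ⊆ s) (n : ℕ) :
    ∃ ξ ∈ Ioo a x, f x - taylorWithinEval f n (Icc a x) a x =
      iteratedDerivWithin (n + 1) f s ξ * (x - ξ) ^ n / n.factorial * (x - a) := by
  have hdiff : UniqueDiffOn ℝ (Icc a x) := uniqueDiffOn_Icc hax
  have hfx : AbsolutelyMonotoneOn f (Icc a x) := absolutelyMonotoneOn_mono hf hIcc
  have hf' := hfx.contDiffOn.differentiableOn_iteratedDerivWithin (m := n)
    (mod_cast WithTop.coe_lt_top _) hdiff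
  rw [← uIcc_of_le hax.le] at hf'
  obtain ⟨ξ, hξ, hrem⟩ := taylor_mean_remainder_cauchy hax.ne
    (by simpa only [uIcc_of_le hax.le] using contDiffOn_nat_of_absolutelyMonotoneOn hfx n)
    (hf'.mono uIoo_subset_uIcc_self)
  rw [uIoo_of_le hax.le] at hξ
  rw [uIcc_of_le hax.le, iteratedDerivWithin_eq_of_subset hIcc hdiff hs
    (contDiffOn_nat_of_absolutelyMonotoneOn hf _) (Ioo_subset_Icc_self hξ)] at hrem
  exact ⟨ξ, hξ, hrem⟩

lemma sub_taylorWithinEval_le_of_absolutelyMonotoneOn (hax : a < x) (hxb : x < b)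
    (hf : AbsolutelyMonotoneOn f (Icc a b)) (n : ℕ) :
    f x - taylorWithinEval f n (Icc a x) a x ≤
      (n + 1) * ((x - a) / (b - a)) ^ n * (f b * (x - a) / (b - x)) := by
  have hdiff : UniqueDiffOn ℝ (Icc a b) := uniqueDiffOn_Icc (hax.trans hxb)
  obtain ⟨ξ, ⟨haξ, hξx⟩, hrem⟩ := exists_cauchy_remainder_of_absolutelyMonotoneOn hdiff hf hax
    (Icc_subset_Icc_right hxb.le) n
  have hbξ : 0 < b - ξ := by linarith
  have hbound := iteratedDerivWithin_mul_pow_div_factorial_le hdiff hf (sub_pos.1 hbξ)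
    (Icc_subset_Icc_left haξ.le) (n + 1)
  have hfb : 0 ≤ f b := by
    simpa using hf.iteratedDerivWithin_nonneg hdiff 0 (right_mem_Icc.2 (hax.trans hxb).le)
  have hratio : (x - ξ) / (b - ξ) ≤ (x - a) / (b - a) := by
    rw [div_le_div_iff₀ hbξ (by linarith)]
    nlinarith
  set D := iteratedDerivWithin (n + 1) f (Icc a b) ξ
  calc f x - taylorWithinEval f n (Icc a x) a x
      = (n + 1) * ((x - ξ) / (b - ξ)) ^ n *
          (D * (b - ξ) ^ (n + 1) / (n + 1).factorial * (x - a) / (b - ξ)) := by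
        rw [hrem, Nat.factorial_succ, div_pow]
        push_cast
        field_simp
        ring
    _ ≤ (n + 1) * ((x - a) / (b - a)) ^ n * (f b * (x - a) / (b - x)) := by
        have : 0 ≤ D := hf.iteratedDerivWithin_nonneg hdiff _ ⟨haξ.le, by linarith⟩
        have : 0 < b - x := sub_pos.2 hxb
        have : 0 ≤ x - a := by linarith
        have : 0 ≤ (x - ξ) / (b - ξ) := div_nonneg (by linarith) hbξ.le
        have : 0 ≤ (x - a) / (b - a) := this.trans hratio
        gcongr

lemma tendsto_taylorWithinEval_of_absolutelyMonotoneOn (hf : AbsolutelyMonotoneOn f (Icc a b))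
    (hx : x ∈ Ioo a b) :
    Tendsto (fun n => taylorWithinEval f n (Icc a x) a x) atTop (𝓝 (f x)) := by
  obtain ⟨hax, hxb⟩ := hx
  have hratio : 0 ≤ (x - a) / (b - a) ∧ (x - a) / (b - a) < 1 :=
    ⟨div_nonneg (by linarith) (by linarith), (div_lt_one (by linarith)).2 (by linarith)⟩
  have herror : Tendsto (fun n : ℕ =>
      (n + 1) * ((x - a) / (b - a)) ^ n * (f b * (x - a) / (b - x))) atTop (𝓝 0) := by
    have := (tendsto_self_mul_const_pow_of_lt_one hratio.1 hratio.2).add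
      (tendsto_pow_atTop_nhds_zero_of_lt_one hratio.1 hratio.2)
    simpa [add_mul] using this.mul_const (f b * (x - a) / (b - x))
  have hrem : Tendsto (fun n => f x - taylorWithinEval f n (Icc a x) a x) atTop (𝓝 0) :=
    squeeze_zero
      (fun n => sub_nonneg.2 <| taylorWithinEval_le_of_absolutelyMonotoneOn hax.le
        (absolutelyMonotoneOn_mono hf (Icc_subset_Icc_right hxb.le)) n)
      (fun n => sub_taylorWithinEval_le_of_absolutelyMonotoneOn hax hxb hf n) herror
  simpa using hrem.const_sub (f x)

lemma hasSum_taylor_of_absolutelyMonotoneOn (hs : UniqueDiffOn ℝ s)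
    (hf : AbsolutelyMonotoneOn f s) (hIcc : Icc a b ⊆ s) (hx : x ∈ Ico a b) :
    HasSum (fun k => iteratedDerivWithin k f s a / k.factorial * (x - a) ^ k) (f x) := by
  rcases hx.1.eq_or_lt with rfl | hax
  · convert hasSum_single (0 : ℕ) fun k hk => ?_ using 1 <;> simp_all
  have hsubset : Icc a x ⊆ s := (Icc_subset_Icc_right hx.2.le).trans hIcc
  have hpartial (n : ℕ) : taylorWithinEval f n (Icc a x) a x = ∑ k ∈ Finset.range (n + 1),
      iteratedDerivWithin k f s a / k.factorial * (x - a) ^ k := by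
    rw [taylor_within_apply]
    refine Finset.sum_congr rfl fun k _ => ?_
    rw [iteratedDerivWithin_eq_of_subset hsubset (uniqueDiffOn_Icc hax) hs
      (contDiffOn_nat_of_absolutelyMonotoneOn hf k) (left_mem_Icc.2 hax.le), smul_eq_mul]
    ring
  have hnonneg (k : ℕ) : 0 ≤ iteratedDerivWithin k f s a / k.factorial * (x - a) ^ k :=
    mul_nonneg (div_nonneg (hf.iteratedDerivWithin_nonneg hs k
      (hsubset (left_mem_Icc.2 hax.le))) (Nat.cast_nonneg _)) (pow_nonneg (by linarith) _)
  rw [hasSum_iff_tendsto_nat_of_nonneg hnonneg, ← tendsto_add_atTop_iff_nat 1]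
  simp only [← hpartial]
  exact tendsto_taylorWithinEval_of_absolutelyMonotoneOn (absolutelyMonotoneOn_mono hf hIcc)
    ⟨hax, hx.2⟩

end Bernstein

/-- `F` preserves positivity on `S` when applied entrywise to square matrices of every finite
size with entries in `S`. -/
def PreservesPosSemidefOn (F : ℝ → ℝ) (S : Set ℝ) : Prop :=
  ∀ (n : ℕ) (A : Matrix (Fin n) (Fin n) ℝ),
    (∀ i j, A i j ∈ S) → A.PosSemidef → (A.map F).PosSemidef

section Preservers

variable {F : ℝ → ℝ} {ρ : ℝ}

lemma AbsMonOnIco.absolutelyMonotoneOn (hF : AbsMonOnIco F ρ) :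
    AbsolutelyMonotoneOn F (Ioo 0 ρ) :=
  (AbsolutelyMonotoneOn.iff_iteratedDerivWithin_nonneg (uniqueDiffOn_Ioo 0 ρ)).2 hF.2

lemma AbsMonOnIco.hasSum_taylor (hF : AbsMonOnIco F ρ) {δ x : ℝ} (hδ : 0 < δ) (hx : 0 ≤ x)
    (hxρ : δ + x < ρ) :
    HasSum (fun k => iteratedDerivWithin k F (Ioo 0 ρ) δ / k.factorial * x ^ k) (F (δ + x)) := by
  obtain ⟨b, hxb, hbρ⟩ := exists_between hxρ
  simpa using hasSum_taylor_of_absolutelyMonotoneOn (uniqueDiffOn_Ioo 0 ρ)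
    hF.absolutelyMonotoneOn (Icc_subset_Ioo hδ hbρ) (x := δ + x) ⟨by linarith, hxb⟩

lemma AbsMonOnIco.preservesPosSemidefOn_Ico (hρ : 0 < ρ) (hF : AbsMonOnIco F ρ) :
    PreservesPosSemidefOn F (Ico 0 ρ) := by
  intro n A hAρ hA
  -- `F` is only continuous at `0`, so expand it at `δ > 0` and let `δ` tend to `0`.
  refine posSemidef_of_tendsto (l := 𝓝[>] (0 : ℝ)) (B := fun δ => A.map fun x => F (δ + x)) ?_
    fun i j => ?_
  · have hlt : ∀ᶠ δ in 𝓝[>] (0 : ℝ), ∀ i j, δ + A i j < ρ := by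
      refine eventually_all.2 fun i => eventually_all.2 fun j => ?_
      filter_upwards [nhdsWithin_le_nhds (Iio_mem_nhds (sub_pos.2 (hAρ i j).2))] with δ hδ
      exact lt_sub_iff_add_lt.1 hδ
    filter_upwards [hlt, Ioo_mem_nhdsGT hρ] with δ hδρ hδ
    exact posSemidef_map_of_hasSum hA
      (fun k => div_nonneg (hF.2.2 k δ hδ) (Nat.cast_nonneg _))
      fun i j => hF.hasSum_taylor hδ.1 (hAρ i j).1 (hδρ i j)
  · have hshift : Tendsto (fun δ => δ + A i j) (𝓝[>] 0) (𝓝[Ico 0 ρ] (A i j)) := by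
      refine tendsto_nhdsWithin_iff.2
        ⟨((continuous_add_const (A i j)).tendsto' _ _ (zero_add _)).mono_left
          nhdsWithin_le_nhds, ?_⟩
      filter_upwards [Ioo_mem_nhdsGT (sub_pos.2 (hAρ i j).2)] with δ hδ
      exact ⟨add_nonneg hδ.1.le (hAρ i j).1, lt_sub_iff_add_lt.1 hδ.2⟩
    exact (hF.1 _ (hAρ i j)).tendsto.comp hshift

lemma PreservesPosSemidefOn.Icc_of_Ico (hρ : 0 < ρ) (hF : ContinuousOn F (Icc 0 ρ))
    (h : PreservesPosSemidefOn F (Ico 0 ρ)) : PreservesPosSemidefOn F (Icc 0 ρ) := by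
  intro n A hAρ hA
  refine posSemidef_of_tendsto (l := 𝓝[<] (1 : ℝ)) (B := fun t => (t • A).map F) ?_
    fun i j => ?_
  · filter_upwards [Ioo_mem_nhdsLT (zero_lt_one (α := ℝ))] with t ht
    refine h n _ (fun i j => ⟨mul_nonneg ht.1.le (hAρ i j).1, ?_⟩) (hA.smul ht.1.le)
    calc t * A i j ≤ t * ρ := mul_le_mul_of_nonneg_left (hAρ i j).2 ht.1.le
      _ < ρ := mul_lt_of_lt_one_left hρ ht.2
  · have hscale : Tendsto (fun t => t * A i j) (𝓝[<] 1) (𝓝[Icc 0 ρ] (A i j)) := by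
      refine tendsto_nhdsWithin_iff.2
        ⟨((continuous_mul_const (A i j)).tendsto' _ _ (one_mul _)).mono_left
          nhdsWithin_le_nhds, ?_⟩
      filter_upwards [Ioo_mem_nhdsLT (zero_lt_one (α := ℝ))] with t ht
      exact ⟨mul_nonneg ht.1.le (hAρ i j).1,
        (mul_le_of_le_one_left (hAρ i j).1 ht.2.le).trans (hAρ i j).2⟩
    exact (hF _ (hAρ i j)).tendsto.comp hscale

lemma AbsMonOnIco.preservesPosSemidefOn_Icc (hρ : 0 < ρ) (hF : AbsMonOnIco F ρ) {L : ℝ}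
    (hL : Tendsto F (𝓝[<] ρ) (𝓝 L)) (hLρ : L ≤ F ρ) : PreservesPosSemidefOn F (Icc 0 ρ) := by
  intro n A hAρ hA
  have hcont : ContinuousOn (Function.update F ρ L) (Icc 0 ρ) := by
    rw [continuousOn_update_iff, Icc_sdiff_right]
    exact ⟨hF.1, fun _ => hL.mono_left (nhdsWithin_mono _ Ico_subset_Iio_self)⟩
  have hIco : PreservesPosSemidefOn (Function.update F ρ L) (Ico 0 ρ) := by
    intro n A hAρ hA
    convert hF.preservesPosSemidefOn_Ico hρ n A hAρ hA using 1
    ext i j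
    exact Function.update_of_ne (hAρ i j).2.ne _ _
  have hsplit : A.map F = A.map (Function.update F ρ L) +
      (F ρ - L) • A.map (({ρ} : Set ℝ).indicator (1 : ℝ → ℝ)) := by
    ext i j
    by_cases h : A i j = ρ <;> simp [h]
  rw [hsplit]
  exact (hIco.Icc_of_Ico hρ hcont n A hAρ hA).add
    ((posSemidef_map_indicator_singleton hA hρ hAρ).smul (sub_nonneg.2 hLρ))

end Preservers

section Horn

variable {f : ℝ → ℝ} {a : ℝ} {N : ℕ}

lemma isLittleO_sub_taylor_of_contDiffAt (hf : ContDiffAt ℝ N f a) :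
    (fun h => f (a + h) - ∑ m ∈ Finset.range (N + 1), iteratedDeriv m f a / m.factorial * h ^ m)
      =o[𝓝 0] fun h => h ^ N := by
  obtain ⟨r, hr, hball⟩ := Metric.eventually_nhds_iff_ball.1 (hf.eventually (by simp))
  have htaylor := taylor_isLittleO (convex_ball a r) (Metric.mem_ball_self hr)
    fun x hx => (hball x hx).contDiffWithinAt
  rw [Metric.isOpen_ball.nhdsWithin_eq (Metric.mem_ball_self hr)] at htaylor
  have hshift : Tendsto (fun h => a + h) (𝓝 0) (𝓝 a) :=
    (continuous_const_add a).tendsto' _ _ (add_zero a)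
  refine (htaylor.comp_tendsto hshift).congr (fun h => ?_) fun h => ?_
  · simp only [Function.comp_apply, taylor_within_apply, add_sub_cancel_left, smul_eq_mul]
    congr 1
    refine Finset.sum_congr rfl fun m _ => ?_
    rw [iteratedDerivWithin_of_isOpen Metric.isOpen_ball (Metric.mem_ball_self hr)]
    ring
  · simp only [Function.comp_apply, add_sub_cancel_left]

lemma tendsto_sum_div_pow_of_moments_eq_zero {ι : Type*} [Fintype ι] {w t : ι → ℝ}
    (hmoment : ∀ m < N, ∑ i, w i * t i ^ m = 0) (hf : ContDiffAt ℝ N f a) :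
    Tendsto (fun ε => (∑ i, w i * f (a + ε * t i)) / ε ^ N) (𝓝[≠] 0)
      (𝓝 (iteratedDeriv N f a / N.factorial * ∑ i, w i * t i ^ N)) := by
  set T : ℝ → ℝ := fun h => ∑ m ∈ Finset.range (N + 1), iteratedDeriv m f a / m.factorial * h ^ m
  have hpoly (ε : ℝ) : ∑ i, w i * T (ε * t i) =
      iteratedDeriv N f a / N.factorial * (∑ i, w i * t i ^ N) * ε ^ N := by
    calc ∑ i, w i * T (ε * t i)
        = ∑ m ∈ Finset.range (N + 1),
            iteratedDeriv m f a / m.factorial * (∑ i, w i * t i ^ m) * ε ^ m := by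
          simp only [T, Finset.mul_sum, Finset.sum_mul]
          rw [Finset.sum_comm]
          exact Finset.sum_congr rfl fun m _ => Finset.sum_congr rfl fun i _ => by ring
      _ = iteratedDeriv N f a / N.factorial * (∑ i, w i * t i ^ N) * ε ^ N := by
          rw [Finset.sum_range_succ, Finset.sum_eq_zero fun m hm => ?_, zero_add]
          rw [hmoment m (Finset.mem_range.1 hm), mul_zero, zero_mul]
  have hscale (i : ι) : (fun ε => f (a + ε * t i) - T (ε * t i)) =o[𝓝[≠] 0] fun ε => ε ^ N := by
    have htendsto : Tendsto (fun ε => ε * t i) (𝓝[≠] 0) (𝓝 0) :=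
      ((continuous_mul_const (t i)).tendsto' _ _ (zero_mul _)).mono_left nhdsWithin_le_nhds
    refine ((isLittleO_sub_taylor_of_contDiffAt hf).comp_tendsto htendsto).trans_isBigO ?_
    simpa only [Function.comp_def, mul_pow, mul_comm] using
      Asymptotics.isBigO_const_mul_self (t i ^ N) (fun ε : ℝ => ε ^ N) _
  have herror := (Asymptotics.IsLittleO.fun_sum fun i (_ : i ∈ Finset.univ) =>
    (hscale i).const_mul_left (w i)).tendsto_div_nhds_zero
  have := herror.add_const (iteratedDeriv N f a / N.factorial * ∑ i, w i * t i ^ N)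
  rw [zero_add] at this
  refine this.congr' ?_
  filter_upwards [self_mem_nhdsWithin] with ε hε
  have : ε ^ N ≠ 0 := pow_ne_zero _ hε
  simp only [mul_sub, Finset.sum_sub_distrib, hpoly]
  field_simp
  ring

/-- The Hankel matrix with entries `a + ε 2⁻⁽ⁱ⁺ʲ⁾`, used with `ε → 0⁺` to test the
derivatives of a preserver at `a`. -/
noncomputable def hornMatrix (n : ℕ) (a ε : ℝ) : Matrix (Fin n) (Fin n) ℝ :=
  Matrix.of fun i j => a + ε * (1 / 2) ^ (i + j : ℕ)

lemma IsHankelMat.isSymm {n : ℕ} {A : Matrix (Fin n) (Fin n) ℝ} (hA : IsHankelMat A) : A.IsSymm :=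
  Matrix.IsSymm.ext fun _ _ => hA _ _ _ _ (add_comm _ _)

lemma isHankelMat_hornMatrix (n : ℕ) (a ε : ℝ) : IsHankelMat (hornMatrix n a ε) :=
  fun i j k l hijkl => by simp only [hornMatrix, Matrix.of_apply, hijkl]

lemma posSemidef_hornMatrix (n : ℕ) {ε : ℝ} (ha : 0 ≤ a) (hε : 0 ≤ ε) :
    (hornMatrix n a ε).PosSemidef := by
  let u : Fin n → ℝ := fun i => (1 / 2) ^ (i : ℕ)
  have hsplit : hornMatrix n a ε =
      a • Matrix.vecMulVec 1 (star 1) + ε • Matrix.vecMulVec u (star u) := by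
    ext i j
    simp [hornMatrix, Matrix.vecMulVec_apply, pow_add, u]
  rw [hsplit]
  exact ((Matrix.posSemidef_vecMulVec_self_star _).smul ha).add
    ((Matrix.posSemidef_vecMulVec_self_star _).smul hε)

lemma hornMatrix_apply_mem_Icc {n : ℕ} {ε : ℝ} (hε : 0 ≤ ε) (i j : Fin n) :
    hornMatrix n a ε i j ∈ Icc a (a + ε) := by
  have hpow : ((1 : ℝ) / 2) ^ (i + j : ℕ) ≤ 1 := pow_le_one₀ (by norm_num) (by norm_num)
  exact ⟨le_add_of_nonneg_right (by positivity),
    add_le_add_right (mul_le_of_le_one_right hε hpow) a⟩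

lemma exists_sum_mul_pow_eq_zero {u : ℝ} (hu : 0 < u) (hu1 : u < 1) (N : ℕ) :
    ∃ v : Fin (N + 1) → ℝ, (∀ m < N, ∑ i, v i * (u ^ m) ^ (i : ℕ) = 0) ∧
      ∑ i, v i * (u ^ N) ^ (i : ℕ) ≠ 0 := by
  set p : Polynomial ℝ := ∏ m ∈ Finset.range N, (Polynomial.X - Polynomial.C (u ^ m))
  have hdeg : p.natDegree < N + 1 := by
    rw [Polynomial.natDegree_finsetProd_X_sub_C_eq_card, Finset.card_range]
    exact N.lt_succ_self
  have hsum (x : ℝ) : ∑ i : Fin (N + 1), p.coeff i * x ^ (i : ℕ) =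
      ∏ m ∈ Finset.range N, (x - u ^ m) := by
    rw [Fin.sum_univ_eq_sum_range (fun i => p.coeff i * x ^ i), ← p.eval_eq_sum_range' hdeg]
    simp only [p, Polynomial.eval_prod, Polynomial.eval_sub, Polynomial.eval_X, Polynomial.eval_C]
  refine ⟨fun i => p.coeff i, fun m hm => ?_, ?_⟩
  · rw [hsum, Finset.prod_eq_zero (Finset.mem_range.2 hm) (sub_self _)]
  · rw [hsum]
    exact Finset.prod_ne_zero_iff.2 fun m hm =>
      sub_ne_zero.2 (pow_lt_pow_right_of_lt_one₀ hu hu1 (Finset.mem_range.1 hm)).ne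

lemma iteratedDeriv_nonneg_of_posSemidef_hornMatrix (hf : ContDiffAt ℝ N f a)
    (h : ∀ᶠ ε in 𝓝[>] 0, ((hornMatrix (N + 1) a ε).map f).PosSemidef) :
    0 ≤ iteratedDeriv N f a := by
  obtain ⟨v, hvanish, hN⟩ := exists_sum_mul_pow_eq_zero (u := 1 / 2) (by norm_num) (by norm_num) N
  have hmoment (m : ℕ) : ∑ q : Fin (N + 1) × Fin (N + 1),
      v q.1 * v q.2 * ((1 / 2 : ℝ) ^ (q.1 + q.2 : ℕ)) ^ m =
        (∑ i, v i * ((1 / 2) ^ m) ^ (i : ℕ)) ^ 2 := by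
    rw [Fintype.sum_prod_type, sq, Finset.sum_mul_sum]
    exact Finset.sum_congr rfl fun i _ => Finset.sum_congr rfl fun j _ => by ring
  have hlim := tendsto_sum_div_pow_of_moments_eq_zero
    (w := fun q : Fin (N + 1) × Fin (N + 1) => v q.1 * v q.2)
    (t := fun q => (1 / 2) ^ (q.1 + q.2 : ℕ))
    (fun m hm => by rw [hmoment, hvanish m hm, sq, zero_mul]) hf
  have hnonneg := ge_of_tendsto (hlim.mono_left (nhdsGT_le_nhdsNE 0)) (b := 0) <| by
    filter_upwards [h, self_mem_nhdsWithin] with ε hε hε0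
    have := (posSemidef_iff_sum_nonneg.1 hε).2 v
    simp only [Fintype.sum_prod_type]
    exact div_nonneg this (pow_nonneg (le_of_lt hε0) N)
  rw [hmoment] at hnonneg
  have hdiv := nonneg_of_mul_nonneg_left hnonneg (by positivity)
  rwa [le_div_iff₀ (by positivity), zero_mul] at hdiv

end Horn

section Mollification

open MeasureTheory Convolution

variable {c : ℝ} (φ : ContDiffBump c) {H : ℝ → ℝ}

lemma le_sum_mul_normed_convolution {ι : Type*} [Fintype ι] (hH : LocallyIntegrable H)
    {w x : ι → ℝ} {C : ℝ} (hC : ∀ t ∈ Metric.ball c φ.rOut, C ≤ ∑ i, w i * H (x i - t)) :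
    C ≤ ∑ i, w i * (φ.normed volume ⋆[ContinuousLinearMap.lsmul ℝ ℝ] H) (x i) := by
  have hint (y : ℝ) : Integrable fun t => φ.normed volume t * H (y - t) := by
    simpa [ConvolutionExistsAt] using φ.hasCompactSupport_normed.convolutionExists_left
      (ContinuousLinearMap.lsmul ℝ ℝ) φ.continuous_normed hH y
  have hint' (i : ι) : Integrable fun t => w i * (φ.normed volume t * H (x i - t)) :=
    (hint (x i)).const_mul (w i)
  calc C = ∫ t, φ.normed volume t * C := by
        rw [integral_mul_const, φ.integral_normed, one_mul]
    _ ≤ ∫ t, ∑ i, w i * (φ.normed volume t * H (x i - t)) := by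
        refine integral_mono (φ.integrable_normed.mul_const C)
          (integrable_finsetSum _ fun i _ => hint' i) fun t => ?_
        simp only [mul_left_comm (w _), ← Finset.mul_sum]
        by_cases ht : t ∈ Metric.ball c φ.rOut
        · exact mul_le_mul_of_nonneg_left (hC t ht) (φ.nonneg_normed t)
        · rw [← φ.support_normed_eq (μ := volume), Function.notMem_support] at ht
          simp [ht]
    _ = ∑ i, w i * (φ.normed volume ⋆[ContinuousLinearMap.lsmul ℝ ℝ] H) (x i) := by
        rw [integral_finsetSum _ fun i _ => hint' i]
        simp only [integral_const_mul, convolution, ContinuousLinearMap.lsmul_apply, smul_eq_mul]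

lemma posSemidef_map_normed_convolution {ι : Type*} [Finite ι] (hH : LocallyIntegrable H)
    {A : Matrix ι ι ℝ} (hA : A.IsSymm)
    (h : ∀ t ∈ Metric.ball c φ.rOut, (A.map fun x => H (x - t)).PosSemidef) :
    (A.map (φ.normed volume ⋆[ContinuousLinearMap.lsmul ℝ ℝ] H)).PosSemidef := by
  cases nonempty_fintype ι
  refine posSemidef_iff_sum_nonneg.2 ⟨hA.map _, fun v => ?_⟩
  simp only [← Fintype.sum_prod_type', Matrix.map_apply]
  refine le_sum_mul_normed_convolution φ hH (w := fun q : ι × ι => v q.1 * v q.2)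
    (x := fun q => A q.1 q.2) fun t ht => ?_
  simpa only [Fintype.sum_prod_type, Matrix.map_apply] using
    (posSemidef_iff_sum_nonneg.1 (h t ht)).2 v

lemma normed_convolution_mem_Icc_of_monotone (hH : Monotone H) (x : ℝ) :
    (φ.normed volume ⋆[ContinuousLinearMap.lsmul ℝ ℝ] H) x ∈
      Icc (H (x - c - φ.rOut)) (H (x - c + φ.rOut)) := by
  have hH' : LocallyIntegrable H := hH.locallyIntegrable
  constructor
  · simpa using le_sum_mul_normed_convolution φ hH' (w := fun _ : Unit => 1) (x := fun _ => x)
      (C := H (x - c - φ.rOut)) fun t ht => by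
        rw [Real.ball_eq_Ioo] at ht
        simpa using hH (by linarith [ht.2])
  · simpa using le_sum_mul_normed_convolution φ hH' (w := fun _ : Unit => -1) (x := fun _ => x)
      (C := -H (x - c + φ.rOut)) fun t ht => by
        rw [Real.ball_eq_Ioo] at ht
        simpa using hH (by linarith [ht.1])

end Mollification

/-- The variant of `PreservesPosSemidefOn` in which only Hankel matrices are tested. -/
def PreservesHankelPosSemidefOn (F : ℝ → ℝ) (S : Set ℝ) : Prop :=
  ∀ (n : ℕ) (A : Matrix (Fin n) (Fin n) ℝ), IsHankelMat A →
    (∀ i j, A i j ∈ S) → A.PosSemidef → (A.map F).PosSemidef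

namespace PreservesHankelPosSemidefOn

variable {F : ℝ → ℝ} {S T : Set ℝ}

lemma mono (hF : PreservesHankelPosSemidefOn F T) (hST : S ⊆ T) :
    PreservesHankelPosSemidefOn F S :=
  fun n A hHankel hA => hF n A hHankel fun i j => hST (hA i j)

lemma congr {G : ℝ → ℝ} (hF : PreservesHankelPosSemidefOn F S) (hFG : EqOn F G S) :
    PreservesHankelPosSemidefOn G S := by
  intro n A hHankel hAS hA
  convert hF n A hHankel hAS hA using 1
  ext i j
  exact (hFG (hAS i j)).symm

lemma monotoneOn (hF : PreservesHankelPosSemidefOn F S) (hS : S ⊆ Ici 0) : MonotoneOn F S := by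
  intro x hx y hy hxy
  have hHankel : IsHankelMat !![y, x; x, y] := by
    intro i j k l h
    fin_cases i <;> fin_cases j <;> fin_cases k <;> fin_cases l <;> simp_all
  have hA : (!![y, x; x, y]).PosSemidef := by
    refine posSemidef_iff_sum_nonneg.2 ⟨hHankel.isSymm, fun v => ?_⟩
    have hsquares : ∑ i, ∑ j, v i * v j * !![y, x; x, y] i j =
        x * (v 0 + v 1) ^ 2 + (y - x) * (v 0 ^ 2 + v 1 ^ 2) := by
      simp only [Matrix.of_apply, Matrix.cons_val', Matrix.cons_val_fin_one, Fin.sum_univ_two,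
        Matrix.cons_val_zero, Matrix.cons_val_one]
      ring
    have : 0 ≤ x := hS hx
    have : 0 ≤ y - x := sub_nonneg.2 hxy
    rw [hsquares]
    positivity
  have hFA := hF 2 _ hHankel (by simp [Fin.forall_fin_two, hx, hy]) hA
  have htest := (posSemidef_iff_sum_nonneg.1 hFA).2 ![1, -1]
  simp only [Matrix.map_apply, Matrix.of_apply, Matrix.cons_val', Matrix.cons_val_fin_one,
    Fin.sum_univ_two, Matrix.cons_val_zero, Matrix.cons_val_one] at htest
  linarith

lemma seven_mul_le (hF : PreservesHankelPosSemidefOn F S) {x : ℝ} (hx : 0 ≤ x)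
    (h0S : 0 ∈ S) (hxS : x ∈ S) (h2xS : 2 * x ∈ S) : 7 * F x ≤ 5 * F (2 * x) + 2 * F 0 := by
  set A : Matrix (Fin 3) (Fin 3) ℝ := !![2 * x, 0, x; 0, x, x; x, x, 2 * x]
  have hHankel : IsHankelMat A := by
    intro i j k l h
    fin_cases i <;> fin_cases j <;> fin_cases k <;> fin_cases l <;> simp_all [A]
  have hA : A.PosSemidef := by
    refine posSemidef_iff_sum_nonneg.2 ⟨hHankel.isSymm, fun v => ?_⟩
    have hsquares : ∑ i, ∑ j, v i * v j * A i j =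
        x * (v 0 ^ 2 + (v 0 + v 2) ^ 2 + (v 1 + v 2) ^ 2) := by
      simp only [A, Matrix.of_apply, Matrix.cons_val', Matrix.cons_val_fin_one, Fin.sum_univ_three,
        Matrix.cons_val_zero, Matrix.cons_val_one, Matrix.cons_val]
      ring
    rw [hsquares]
    positivity
  have hFA := hF 3 A hHankel (by simp [A, Fin.forall_fin_succ, h0S, hxS, h2xS]) hA
  have htest := (posSemidef_iff_sum_nonneg.1 hFA).2 ![1, 1, -2]
  simp only [A, Matrix.map_apply, Matrix.of_apply, Matrix.cons_val', Matrix.cons_val_fin_one,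
    Fin.sum_univ_three, Matrix.cons_val_zero, Matrix.cons_val_one, Matrix.cons_val] at htest
  linarith

lemma posSemidef_map_hornMatrix (hF : PreservesHankelPosSemidefOn F S) (n : ℕ) {a ε : ℝ}
    (ha : 0 ≤ a) (hε : 0 ≤ ε) (hS : Icc a (a + ε) ⊆ S) : ((hornMatrix n a ε).map F).PosSemidef :=
  hF n _ (isHankelMat_hornMatrix n a ε) (fun i j => hS (hornMatrix_apply_mem_Icc hε i j))
    (posSemidef_hornMatrix n ha hε)

lemma iteratedDeriv_nonneg (hF : PreservesHankelPosSemidefOn F S) {N : ℕ} {a : ℝ} (ha : 0 ≤ a)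
    (hS : S ∈ 𝓝[≥] a) (hFa : ContDiffAt ℝ N F a) : 0 ≤ iteratedDeriv N F a := by
  obtain ⟨b, hab, hbS⟩ := (mem_nhdsGE_iff_exists_Icc_subset).1 hS
  refine iteratedDeriv_nonneg_of_posSemidef_hornMatrix hFa ?_
  filter_upwards [Ioo_mem_nhdsGT (sub_pos.2 hab)] with ε hε
  exact hF.posSemidef_map_hornMatrix _ ha hε.1.le
    ((Icc_subset_Icc_right (by linarith [hε.2])).trans hbS)

section Mollification

open MeasureTheory Convolution

lemma iteratedDeriv_normed_convolution_nonneg {c R a : ℝ} (φ : ContDiffBump c)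
    (hF : PreservesHankelPosSemidefOn F (Icc 0 R)) (hFint : LocallyIntegrable F)
    (hac : 0 ≤ a - c - φ.rOut) (haR : a - c + φ.rOut < R) (N : ℕ) :
    0 ≤ iteratedDeriv N (φ.normed volume ⋆[ContinuousLinearMap.lsmul ℝ ℝ] F) a := by
  have hsmooth := φ.hasCompactSupport_normed.contDiff_convolution_left (μ := volume)
    (ContinuousLinearMap.lsmul ℝ ℝ) (φ.contDiff_normed (μ := volume) (n := N)) hFint
  refine iteratedDeriv_nonneg_of_posSemidef_hornMatrix hsmooth.contDiffAt ?_
  filter_upwards [Ioo_mem_nhdsGT (sub_pos.2 haR)] with ε hε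
  refine posSemidef_map_normed_convolution φ hFint
    (isHankelMat_hornMatrix _ a ε).isSymm fun t ht => ?_
  rw [Real.ball_eq_Ioo] at ht
  have hentry : (hornMatrix (N + 1) a ε).map (fun x => F (x - t)) =
      (hornMatrix (N + 1) (a - t) ε).map F := by
    ext i j
    simp only [Matrix.map_apply, hornMatrix, Matrix.of_apply, sub_add_eq_add_sub]
  rw [hentry]
  exact hF.posSemidef_map_hornMatrix _ (by linarith [ht.2]) hε.1.le
    (Icc_subset_Icc (by linarith [ht.2]) (by linarith [ht.1, hε.2]))

lemma exists_absolutelyMonotoneOn_mem_Icc {ρ r δ : ℝ}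
    (hF : PreservesHankelPosSemidefOn F (Ico 0 ρ)) (hδ : 0 < δ) (hr : r + 3 * δ < ρ) :
    ∃ G : ℝ → ℝ, AbsolutelyMonotoneOn G (Icc 0 r) ∧
      ∀ x ∈ Icc 0 r, G x ∈ Icc (F (x + δ)) (F (x + 3 * δ)) := by
  obtain ⟨R, hrR, hRρ⟩ := exists_between hr
  have hR : Icc 0 R ⊆ Ico 0 ρ := Icc_subset_Ico_right hRρ
  have hmono : MonotoneOn F (Icc 0 R) := (hF.monotoneOn Ico_subset_Ici_self).mono hR
  obtain ⟨H, hH, hFH⟩ := hmono.exists_monotone_extension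
    ⟨F 0, forall_mem_image.2 fun x hx => hmono ⟨le_rfl, hx.1.trans hx.2⟩ hx hx.1⟩
    ⟨F R, forall_mem_image.2 fun x hx => hmono hx ⟨hx.1.trans hx.2, le_rfl⟩ hx.2⟩
  -- Centring the bump at `-2δ` keeps all arguments of `F` inside `[0, R]`, even at `0`.
  let φ : ContDiffBump (-(2 * δ)) := ⟨δ / 2, δ, half_pos hδ, half_lt_self hδ⟩
  have : φ.rOut = δ := rfl
  refine ⟨φ.normed volume ⋆[ContinuousLinearMap.lsmul ℝ ℝ] H,
    .of_contDiff (φ.hasCompactSupport_normed.contDiff_convolution_left _ φ.contDiff_normed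
      hH.locallyIntegrable) fun N a ha => ?_, fun x hx => ?_⟩
  · exact iteratedDeriv_normed_convolution_nonneg φ ((hF.mono hR).congr hFH) hH.locallyIntegrable
      (by linarith [ha.1]) (by linarith [ha.2]) N
  · have hbounds := normed_convolution_mem_Icc_of_monotone φ hH x
    have hlow : x - -(2 * δ) - φ.rOut = x + δ := by linarith
    have hhigh : x - -(2 * δ) + φ.rOut = x + 3 * δ := by linarith
    rwa [hlow, hhigh, ← hFH ⟨by linarith [hx.1], by linarith [hx.2]⟩,
      ← hFH ⟨by linarith [hx.1], by linarith [hx.2]⟩] at hbounds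

end Mollification

end PreservesHankelPosSemidefOn

section PowerSeries

variable {r M : ℝ}

lemma exists_subseq_tendsto_tsum_mul_pow (hr : 0 < r) {c : ℕ → ℕ → ℝ}
    (hc : ∀ n k, c n k ∈ Icc 0 (M / r ^ k)) :
    ∃ (ψ : ℕ → ℕ) (d : ℕ → ℝ), StrictMono ψ ∧ (∀ k, d k ∈ Icc 0 (M / r ^ k)) ∧
      ∀ x ∈ Ico 0 r, Tendsto (fun n => ∑' k, c (ψ n) k * x ^ k) atTop (𝓝 (∑' k, d k * x ^ k)) := by
  obtain ⟨d, hd, ψ, hψ, hlim⟩ :=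
    (isCompact_univ_pi fun k => isCompact_Icc (a := 0) (b := M / r ^ k)).tendsto_subseq
      (x := c) fun n k _ => hc n k
  refine ⟨ψ, d, hψ, fun k => hd k (mem_univ k), fun x hx => ?_⟩
  have hbound (k : ℕ) : M / r ^ k * x ^ k = M * (x / r) ^ k := by
    rw [div_pow]
    ring
  refine tendsto_tsum_of_dominated_convergence (bound := fun k => M / r ^ k * x ^ k) ?_
    (fun k => ((tendsto_pi_nhds.1 hlim k).mul_const _)) (Eventually.of_forall fun n k => ?_)
  · simp only [hbound]
    exact (summable_geometric_of_lt_one (div_nonneg hx.1 hr.le)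
      ((div_lt_one hr).2 hx.2)).mul_left M
  · have : 0 ≤ c (ψ n) k * x ^ k := mul_nonneg (hc _ _).1 (pow_nonneg hx.1 k)
    rw [Real.norm_of_nonneg this]
    exact mul_le_mul_of_nonneg_right (hc _ _).2 (pow_nonneg hx.1 k)

lemma analyticAt_tsum_mul_pow (hr : 0 < r) {d : ℕ → ℝ} (hd : ∀ k, d k ∈ Icc 0 (M / r ^ k)) {x : ℝ}
    (hx : |x| < r) : AnalyticAt ℝ (fun x => ∑' k, d k * x ^ k) x := by
  set p : FormalMultilinearSeries ℝ ℝ ℝ := FormalMultilinearSeries.ofScalars ℝ d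
  have hradius : ENNReal.ofReal r ≤ p.radius := by
    refine p.le_radius_of_bound M (r := r.toNNReal) fun k => ?_
    rw [FormalMultilinearSeries.ofScalars_norm, Real.norm_of_nonneg (hd k).1,
      Real.coe_toNNReal _ hr.le]
    exact (le_div_iff₀ (pow_pos hr k)).1 (hd k).2
  have hsum : p.sum = fun x => ∑' k, d k * x ^ k := by
    ext y
    simp only [← smul_eq_mul]
    exact FormalMultilinearSeries.ofScalars_sum_eq d y
  rw [← hsum]
  refine p.analyticOnNhd x (Metric.eball_subset_eball hradius ?_)
  rwa [Metric.eball_ofReal, mem_ball_zero_iff, Real.norm_eq_abs]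

lemma exists_hasSum_mul_pow_of_absolutelyMonotoneOn (hr : 0 < r) {f : ℝ → ℝ}
    (hf : AbsolutelyMonotoneOn f (Icc 0 r)) :
    ∃ c : ℕ → ℝ, (∀ k, c k ∈ Icc 0 (f r / r ^ k)) ∧
      ∀ x ∈ Ico 0 r, HasSum (fun k => c k * x ^ k) (f x) := by
  have hdiff : UniqueDiffOn ℝ (Icc 0 r) := uniqueDiffOn_Icc hr
  refine ⟨fun k => iteratedDerivWithin k f (Icc 0 r) 0 / k.factorial, fun k => ⟨?_, ?_⟩,
    fun x hx => ?_⟩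
  · exact div_nonneg (hf.iteratedDerivWithin_nonneg hdiff k (left_mem_Icc.2 hr.le))
      (Nat.cast_nonneg _)
  · rw [le_div_iff₀ (pow_pos hr k), div_mul_eq_mul_div]
    simpa only [sub_zero] using
      iteratedDerivWithin_mul_pow_div_factorial_le hdiff hf hr Subset.rfl k
  · simpa only [sub_zero] using hasSum_taylor_of_absolutelyMonotoneOn hdiff hf Subset.rfl hx

lemma exists_subseq_tendsto_analyticAt_of_absolutelyMonotoneOn (hr : 0 < r) {f : ℕ → ℝ → ℝ}
    (hf : ∀ n, AbsolutelyMonotoneOn (f n) (Icc 0 r)) (hM : ∀ n, f n r ≤ M) :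
    ∃ (ψ : ℕ → ℕ) (g : ℝ → ℝ), StrictMono ψ ∧ (∀ x ∈ Ico 0 r, AnalyticAt ℝ g x) ∧
      ∀ x ∈ Ico 0 r, Tendsto (fun n => f (ψ n) x) atTop (𝓝 (g x)) := by
  choose c hc hsum using fun n => exists_hasSum_mul_pow_of_absolutelyMonotoneOn hr (hf n)
  have hcM (n k : ℕ) : c n k ∈ Icc 0 (M / r ^ k) :=
    ⟨(hc n k).1, (hc n k).2.trans (div_le_div_of_nonneg_right (hM n) (pow_pos hr k).le)⟩
  obtain ⟨ψ, d, hψ, hd, hlim⟩ := exists_subseq_tendsto_tsum_mul_pow hr hcM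
  refine ⟨ψ, fun x => ∑' k, d k * x ^ k, hψ, fun x hx => ?_, fun x hx => ?_⟩
  · exact analyticAt_tsum_mul_pow hr hd ((abs_of_nonneg hx.1).trans_lt hx.2)
  · simpa only [(hsum _ x hx).tsum_eq] using hlim x hx

end PowerSeries

lemma eqOn_Ioo_of_interlacing {F g : ℝ → ℝ} {a b : ℝ} (hg : ContinuousOn g (Ioo a b))
    (hFg : ∀ x ∈ Ioo a b, F x ≤ g x)
    (hgF : ∀ x ∈ Ioo a b, ∀ y ∈ Ioo x b, g x ≤ F y) : EqOn F g (Ioo a b) := by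
  intro x hx
  refine le_antisymm (hFg x hx) ?_
  have hgx : Tendsto g (𝓝[<] x) (𝓝 (g x)) :=
    (hg.continuousAt (Ioo_mem_nhds hx.1 hx.2)).tendsto.mono_left nhdsWithin_le_nhds
  refine le_of_tendsto hgx ?_
  filter_upwards [Ioo_mem_nhdsLT hx.1] with y hy
  exact hgF y ⟨hy.1, hy.2.trans hx.2⟩ x ⟨hy.2, hx.2⟩

namespace PreservesHankelPosSemidefOn

variable {F : ℝ → ℝ} {r ρ : ℝ}

lemma exists_analyticAt_interlacing (hF : PreservesHankelPosSemidefOn F (Ico 0 ρ)) (hr : 0 < r)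
    (hrρ : r < ρ) :
    ∃ g : ℝ → ℝ, (∀ x ∈ Ico 0 r, AnalyticAt ℝ g x) ∧ (∀ x ∈ Ico 0 r, F x ≤ g x) ∧
      ∀ x ∈ Ico 0 r, ∀ y ∈ Ioo x r, g x ≤ F y := by
  have hmono : MonotoneOn F (Ico 0 ρ) := hF.monotoneOn Ico_subset_Ici_self
  obtain ⟨R, hrR, hRρ⟩ := exists_between hrρ
  obtain ⟨δ, -, hδmem, hδ⟩ := exists_seq_strictAnti_tendsto' (x := (0 : ℝ)) (y := (R - r) / 3)
    (by linarith)
  have hδR (n : ℕ) : r + 3 * δ n < R := by linarith [(hδmem n).2]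
  choose G hG hGF using fun n =>
    hF.exists_absolutelyMonotoneOn_mem_Icc (hδmem n).1 ((hδR n).trans hRρ)
  have hGR (n : ℕ) : G n r ≤ F R :=
    (hGF n r ⟨hr.le, le_rfl⟩).2.trans (hmono ⟨by linarith [(hδmem n).1], (hδR n).trans hRρ⟩
      ⟨(hr.trans hrR).le, hRρ⟩ (hδR n).le)
  obtain ⟨ψ, g, hψ, hg, hlim⟩ :=
    exists_subseq_tendsto_analyticAt_of_absolutelyMonotoneOn hr hG hGR
  refine ⟨g, hg, fun x hx => ge_of_tendsto' (hlim x hx) fun n => ?_,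
    fun x hx y hy => le_of_tendsto (hlim x hx) ?_⟩
  · have hpos := (hδmem (ψ n)).1
    exact (hmono ⟨hx.1, hx.2.trans hrρ⟩
      ⟨by linarith [hx.1], by linarith [hx.2, hδR (ψ n)]⟩ (by linarith)).trans
        (hGF (ψ n) x ⟨hx.1, hx.2.le⟩).1
  · have hsmall := (hδ.comp hψ.tendsto_atTop).eventually_lt_const
      (show 0 < (y - x) / 3 by linarith [hy.1])
    filter_upwards [hsmall] with n hn
    have hxy : x + 3 * δ (ψ n) ≤ y := by linarith [show δ (ψ n) < (y - x) / 3 from hn]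
    exact (hGF (ψ n) x ⟨hx.1, hx.2.le⟩).2.trans
      (hmono ⟨by linarith [hx.1, (hδmem (ψ n)).1], by linarith [hy.2]⟩
        ⟨by linarith [hx.1, hy.1], hy.2.trans hrρ⟩ hxy)

lemma le_apply_zero_of_eqOn_Ioo (hF : PreservesHankelPosSemidefOn F (Ico 0 r)) (hr : 0 < r)
    {g : ℝ → ℝ} (hFg : EqOn F g (Ioo 0 r)) (hg : ContinuousAt g 0) : g 0 ≤ F 0 := by
  have hlim (c : ℝ) : Tendsto (fun x => g (c * x)) (𝓝[>] 0) (𝓝 (g 0)) := by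
    have hscale : Tendsto (fun x => c * x) (𝓝[>] 0) (𝓝 0) :=
      ((continuous_const_mul c).tendsto' _ _ (mul_zero c)).mono_left nhdsWithin_le_nhds
    exact hg.tendsto.comp hscale
  -- Monotonicity does not exclude a jump of `F` at `0`; a `3 × 3` Hankel matrix does.
  have hle : 7 * g 0 ≤ 5 * g 0 + 2 * F 0 := by
    refine le_of_tendsto_of_tendsto ((hlim 1).const_mul 7)
      (((hlim 2).const_mul 5).add_const (2 * F 0)) ?_
    filter_upwards [Ioo_mem_nhdsGT (half_pos hr)] with x hx
    have hxr : x ∈ Ioo 0 r := ⟨hx.1, by linarith [hx.2]⟩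
    have h2xr : 2 * x ∈ Ioo 0 r := ⟨by linarith [hx.1], by linarith [hx.2]⟩
    rw [one_mul, ← hFg hxr, ← hFg h2xr]
    exact hF.seven_mul_le hx.1.le ⟨le_rfl, hr⟩ (Ioo_subset_Ico_self hxr) (Ioo_subset_Ico_self h2xr)
  linarith

lemma exists_analyticAt_eqOn (hF : PreservesHankelPosSemidefOn F (Ico 0 ρ)) (hr : 0 < r)
    (hrρ : r < ρ) : ∃ g : ℝ → ℝ, (∀ x ∈ Ico 0 r, AnalyticAt ℝ g x) ∧ EqOn F g (Ico 0 r) := by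
  obtain ⟨g, hg, hFg, hgF⟩ := hF.exists_analyticAt_interlacing hr hrρ
  have hIoo : EqOn F g (Ioo 0 r) := by
    refine eqOn_Ioo_of_interlacing (fun x hx => ?_) (fun x hx => hFg x (Ioo_subset_Ico_self hx))
      fun x hx => hgF x (Ioo_subset_Ico_self hx)
    exact (hg x (Ioo_subset_Ico_self hx)).continuousAt.continuousWithinAt
  have hzero : F 0 = g 0 := le_antisymm (hFg 0 ⟨le_rfl, hr⟩) <|
    (hF.mono (Ico_subset_Ico_right hrρ.le)).le_apply_zero_of_eqOn_Ioo hr hIoo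
      (hg 0 ⟨le_rfl, hr⟩).continuousAt
  refine ⟨g, hg, fun x hx => ?_⟩
  rcases hx.1.eq_or_lt with rfl | hpos
  exacts [hzero, hIoo ⟨hpos, hx.2⟩]

lemma continuousOn (hF : PreservesHankelPosSemidefOn F (Ico 0 ρ)) : ContinuousOn F (Ico 0 ρ) := by
  intro x hx
  obtain ⟨r, hxr, hrρ⟩ := exists_between hx.2
  obtain ⟨g, hg, hFg⟩ := hF.exists_analyticAt_eqOn (hx.1.trans_lt hxr) hrρ
  have hxr' : x ∈ Ico 0 r := ⟨hx.1, hxr⟩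
  have hFr : ContinuousWithinAt F (Ico 0 r) x :=
    (hg x hxr').continuousAt.continuousWithinAt.congr hFg (hFg hxr')
  refine hFr.mono_of_mem_nhdsWithin ?_
  filter_upwards [self_mem_nhdsWithin, nhdsWithin_le_nhds (Iio_mem_nhds hxr)] with y hy hyr
  exact ⟨hy.1, hyr⟩

lemma analyticAt (hF : PreservesHankelPosSemidefOn F (Ico 0 ρ)) {x : ℝ} (hx : x ∈ Ioo 0 ρ) :
    AnalyticAt ℝ F x := by
  obtain ⟨r, hxr, hrρ⟩ := exists_between hx.2
  obtain ⟨g, hg, hFg⟩ := hF.exists_analyticAt_eqOn (hx.1.trans hxr) hrρ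
  exact (hg x ⟨hx.1.le, hxr⟩).congr
    (hFg.eventuallyEq_of_mem (Ico_mem_nhds hx.1 hxr)).symm

lemma absMonOnIco (hF : PreservesHankelPosSemidefOn F (Ico 0 ρ)) : AbsMonOnIco F ρ := by
  refine ⟨hF.continuousOn, fun x hx => (hF.analyticAt hx).contDiffAt.contDiffWithinAt,
    fun k x hx => ?_⟩
  rw [iteratedDerivWithin_of_isOpen isOpen_Ioo hx]
  exact hF.iteratedDeriv_nonneg hx.1.le (nhdsWithin_le_nhds (Ico_mem_nhds hx.1 hx.2))
    (hF.analyticAt hx).contDiffAt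

end PreservesHankelPosSemidefOn

lemma exists_tendsto_nhdsLT_le_of_monotoneOn {F : ℝ → ℝ} {a b : ℝ} (hab : a < b)
    (hF : MonotoneOn F (Icc a b)) : ∃ L, Tendsto F (𝓝[<] b) (𝓝 L) ∧ L ≤ F b := by
  have hle : ∀ y ∈ F '' Ioo a b, y ≤ F b := forall_mem_image.2 fun x hx =>
    hF (Ioo_subset_Icc_self hx) (right_mem_Icc.2 hab.le) hx.2.le
  exact ⟨_, (hF.mono Ioo_subset_Icc_self).tendsto_nhdsWithin_Ioo_left
    (nonempty_Ioo.2 hab) ⟨F b, hle⟩, csSup_le ((nonempty_Ioo.2 hab).image F) hle⟩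

/-- Entrywise positivity preservers on matrices with entries in `[0, ρ]` (respectively
`[0, ρ)`): preservation on Hankel matrices, absolute monotonicity, and preservation on
all matrices are equivalent. -/
theorem preserver_closed_zero_rho_TFAE (ρ : ℝ) (hρ : 0 < ρ) (F : ℝ → ℝ) :
    (List.TFAE
      [∀ (n : ℕ) (A : Matrix (Fin n) (Fin n) ℝ), IsHankelMat A →
          (∀ i j, A i j ∈ Set.Icc 0 ρ) → A.PosSemidef → (A.map F).PosSemidef,
        AbsMonOnIco F ρ ∧
          ∃ L : ℝ, Tendsto F (nhdsWithin ρ (Set.Iio ρ)) (nhds L) ∧ L ≤ F ρ,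
        ∀ (n : ℕ) (A : Matrix (Fin n) (Fin n) ℝ),
          (∀ i j, A i j ∈ Set.Icc 0 ρ) → A.PosSemidef → (A.map F).PosSemidef]) ∧
    (List.TFAE
      [∀ (n : ℕ) (A : Matrix (Fin n) (Fin n) ℝ), IsHankelMat A →
          (∀ i j, A i j ∈ Set.Ico 0 ρ) → A.PosSemidef → (A.map F).PosSemidef,
        AbsMonOnIco F ρ,
        ∀ (n : ℕ) (A : Matrix (Fin n) (Fin n) ℝ),
          (∀ i j, A i j ∈ Set.Ico 0 ρ) → A.PosSemidef → (A.map F).PosSemidef]) := by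
  constructor
  · tfae_have 1 → 2 := fun h => by
      have hF : PreservesHankelPosSemidefOn F (Icc 0 ρ) := h
      exact ⟨(hF.mono Ico_subset_Icc_self).absMonOnIco,
        exists_tendsto_nhdsLT_le_of_monotoneOn hρ (hF.monotoneOn Icc_subset_Ici_self)⟩
    tfae_have 2 → 3 := fun ⟨hF, _, hL, hLρ⟩ => hF.preservesPosSemidefOn_Icc hρ hL hLρ
    tfae_have 3 → 1 := fun h n A _ => h n A
    tfae_finish
  · tfae_have 1 → 2 := PreservesHankelPosSemidefOn.absMonOnIco
    tfae_have 2 → 3 := AbsMonOnIco.preservesPosSemidefOn_Ico hρ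
    tfae_have 3 → 1 := fun h n A _ => h n A
    tfae_finish
end
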